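/- Let w, w′ ∈ Sₙ and k ≤ n with w →_{r[k,m]} w′, witnessed by a₁,b₁,…,a_m,b_m with aᵢ ≤ k < bᵢ, w′ = w·t_{a₁,b₁}⋯t_{a_m,b_m}, ℓ(w·t_{a₁,b₁}⋯t_{aᵢ,bᵢ}) = ℓ(w)+i for all i, and b₁,…,b_m distinct. For 1 ≤ j ≤ k set r_j = #{i : aᵢ = j}, μ_j = r_{j+1} + ⋯ + r_k, and λ_j = μ_j + r_j (so λ ⊃ μ are partitions with at most k parts and λ/μ is a skew row of length m whose j-th row has length r_j). Then for every partition ν with at most k parts and ν₁ ≤ n−k, the structure constant c^{w′}_{w, w(ν)} equals the Littlewood–Richardson coefficient c^λ_{μ,ν}. -/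

import Mathlib

open Equiv MvPolynomial

attribute [local instance] Classical.propDecidable

namespace SchubertPieri

/-- Position `j ∈ {1,…,N}` (1-indexed) as an element of `Fin N` (0-indexed). -/
def pos (N : ℕ) [NeZero N] (j : ℕ) : Fin N :=
  ⟨(j - 1) % N, Nat.mod_lt _ (Nat.pos_of_ne_zero (NeZero.ne N))⟩

/-- The transposition `t_{a,b}` interchanging positions `a` and `b` (1-indexed). -/
def t (N : ℕ) [NeZero N] (a b : ℕ) : Equiv.Perm (Fin N) :=
  Equiv.swap (pos N a) (pos N b)

/-- The value `w(j)` for `j ∈ {1,…,N}` (1-indexed). -/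
def val {N : ℕ} [NeZero N] (w : Equiv.Perm (Fin N)) (j : ℕ) : ℕ :=
  (w (pos N j) : ℕ) + 1

/-- The length of `w`: its number of inversions. -/
def len {N : ℕ} (w : Equiv.Perm (Fin N)) : ℕ :=
  (Finset.univ.filter fun p : Fin N × Fin N => p.1 < p.2 ∧ w p.2 < w p.1).card

/-- The longest permutation `w₀ : j ↦ N+1-j`. -/
def w0 (N : ℕ) : Equiv.Perm (Fin N) :=
  ⟨Fin.rev, Fin.rev, Fin.rev_rev, Fin.rev_rev⟩

/-- The product `t_{a 0, b 0} ⋯ t_{a (i-1), b (i-1)}`. -/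
def tProd (N : ℕ) [NeZero N] (a b : ℕ → ℕ) (i : ℕ) : Equiv.Perm (Fin N) :=
  ((List.range i).map fun j => t N (a j) (b j)).prod

/-- `r[k,m] = t_{k,k+1} t_{k,k+2} ⋯ t_{k,k+m}`, the (m+1)-cycle with
`r[k,m](k) = k+m` and `r[k,m](j) = j-1` for `k+1 ≤ j ≤ k+m`. -/
def rPerm (N k m : ℕ) [NeZero N] : Equiv.Perm (Fin N) :=
  ((List.range m).map fun i => t N k (k + 1 + i)).prod

/-- `c[k,m] = t_{k,k+1} t_{k-1,k+1} ⋯ t_{k-m+1,k+1}`, the (m+1)-cycle with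
`c[k,m](j) = j+1` for `k-m+1 ≤ j ≤ k` and `c[k,m](k+1) = k-m+1`. -/
def cPerm (N k m : ℕ) [NeZero N] : Equiv.Perm (Fin N) :=
  ((List.range m).map fun i => t N (k - i) (k + 1)).prod

/-- The conditions that `aᵢ ≤ k < bᵢ` (with all indices in `{1,…,N}`) and that
`ℓ(w t_{a₁ b₁} ⋯ t_{aᵢ bᵢ}) = ℓ(w) + i` for `1 ≤ i ≤ m`. -/
def StepOK (N k m : ℕ) [NeZero N] (w : Equiv.Perm (Fin N)) (a b : ℕ → ℕ) : Prop :=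
  (∀ i, i < m → 1 ≤ a i ∧ a i ≤ k ∧ k < b i ∧ b i ≤ N) ∧
  (∀ i, i ≤ m → len (w * tProd N a b i) = len w + i)

/-- `w →_{r[k,m]} w'`. -/
def RelR (N k m : ℕ) [NeZero N] (w w' : Equiv.Perm (Fin N)) : Prop :=
  ∃ a b : ℕ → ℕ, StepOK N k m w a b ∧ w' = w * tProd N a b m ∧
    (∀ i j, i < m → j < m → i ≠ j → b i ≠ b j)

/-- `w →_{c[k,m]} w'`. -/
def RelC (N k m : ℕ) [NeZero N] (w w' : Equiv.Perm (Fin N)) : Prop :=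
  ∃ a b : ℕ → ℕ, StepOK N k m w a b ∧ w' = w * tProd N a b m ∧
    (∀ i j, i < m → j < m → i ≠ j → a i ≠ a j)

/-- The divided difference operator `∂ᵢ f = (f - sᵢ·f)/(xᵢ - xᵢ₊₁)` (1-indexed `i`);
the quotient is exact, and is recovered here as the (unique) witness of divisibility. -/
noncomputable def divDiff {N : ℕ} [NeZero N] (i : ℕ) (f : MvPolynomial (Fin N) ℤ) :
    MvPolynomial (Fin N) ℤ :=
  if h : (X (pos N i) - X (pos N (i + 1))) ∣ (f - rename (⇑(t N i (i + 1))) f) then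
    h.choose
  else 0

/-- `∂_{a₁} ∘ ⋯ ∘ ∂_{a_p}` applied to `f`, for a word `l = [a₁,…,a_p]`. -/
noncomputable def divDiffWord {N : ℕ} [NeZero N] (l : List ℕ) (f : MvPolynomial (Fin N) ℤ) :
    MvPolynomial (Fin N) ℤ :=
  l.foldr divDiff f

/-- Auxiliary: produce a reduced word for `w` by repeatedly removing a descent. -/
def redWordAux (N : ℕ) [NeZero N] : ℕ → Equiv.Perm (Fin N) → List ℕ
  | 0, _ => []
  | fuel + 1, w =>
    match ((List.range (N - 1)).map (· + 1)).find? (fun i => decide (val w (i + 1) < val w i)) with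
    | none => []
    | some i => redWordAux N fuel (w * t N i (i + 1)) ++ [i]

/-- A canonical reduced word `(a₁,…,a_p)` for `w`, i.e. `w = s_{a₁} ⋯ s_{a_p}` with `p = ℓ(w)`. -/
def redWord (N : ℕ) [NeZero N] (w : Equiv.Perm (Fin N)) : List ℕ :=
  redWordAux N (N * N) w

/-- The staircase monomial `x₁^{N-1} x₂^{N-2} ⋯ x_{N-1}`. -/
noncomputable def staircase (N : ℕ) : MvPolynomial (Fin N) ℤ :=
  ∏ i : Fin N, X i ^ (N - 1 - (i : ℕ))

/-- The Schubert polynomial `𝔖_w = ∂_{w⁻¹w₀}(x₁^{N-1} ⋯ x_{N-1})`. -/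
noncomputable def schubertPoly (N : ℕ) [NeZero N] (w : Equiv.Perm (Fin N)) :
    MvPolynomial (Fin N) ℤ :=
  divDiffWord (redWord N (w⁻¹ * w0 N)) (staircase N)

/-- The ideal of `Rₙ` generated by the symmetric polynomials with zero constant term. -/
noncomputable def symIdeal (N : ℕ) : Ideal (MvPolynomial (Fin N) ℤ) :=
  Ideal.span {f : MvPolynomial (Fin N) ℤ | f.IsSymmetric ∧ constantCoeff f = 0}

/-- The ring `Hₙ = Rₙ/𝒮`. -/
abbrev HRing (N : ℕ) := MvPolynomial (Fin N) ℤ ⧸ symIdeal N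

/-- The class of the Schubert polynomial `𝔖_w` in `Hₙ`. -/
noncomputable def SS (N : ℕ) [NeZero N] (w : Equiv.Perm (Fin N)) : HRing N :=
  Ideal.Quotient.mk (symIdeal N) (schubertPoly N w)

/-- The complete homogeneous symmetric polynomial of degree `m` in `x₁,…,x_k`. -/
noncomputable def hPoly (N k m : ℕ) : MvPolynomial (Fin N) ℤ :=
  ∑ s ∈ (Finset.univ.filter fun i : Fin N => (i : ℕ) < k).sym m,
    (Multiset.map X (s : Multiset (Fin N))).prod

/-- The elementary symmetric polynomial of degree `m` in `x₁,…,x_k`. -/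
noncomputable def ePoly (N k m : ℕ) : MvPolynomial (Fin N) ℤ :=
  ∑ s ∈ (Finset.univ.filter fun i : Fin N => (i : ℕ) < k).powersetCard m, ∏ i ∈ s, X i

/-- Covering relation of the `k`-Bruhat order. -/
def kCover (N k : ℕ) [NeZero N] (w w' : Equiv.Perm (Fin N)) : Prop :=
  ∃ a b : ℕ, 1 ≤ a ∧ a ≤ k ∧ k < b ∧ b ≤ N ∧ w' = w * t N a b ∧ len w' = len w + 1

/-- The (strict) `k`-Bruhat order `<ₖ`. -/
def kBruhat (N k : ℕ) [NeZero N] : Equiv.Perm (Fin N) → Equiv.Perm (Fin N) → Prop :=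
  Relation.TransGen (kCover N k)

/-- The label `w⁽ⁱ⁺¹⁾(a_{i+1})` (0-indexed `i`) of the `(i+1)`-st step of a path. -/
def label {N : ℕ} [NeZero N] (w : Equiv.Perm (Fin N)) (a b : ℕ → ℕ) (i : ℕ) : ℕ :=
  val (w * tProd N a b (i + 1)) (a i)

/-- `(a,b)` encodes a path of length `m` in the `k`-Bruhat order from `w` to `w'`
(normalized so that `a i = b i = 0` for `i ≥ m`, making the encoding unique). -/
def PathWit (N k m : ℕ) [NeZero N] (w w' : Equiv.Perm (Fin N))
    (ab : (ℕ → ℕ) × (ℕ → ℕ)) : Prop :=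
  StepOK N k m w ab.1 ab.2 ∧ w' = w * tProd N ab.1 ab.2 m ∧
    ∀ i, m ≤ i → ab.1 i = 0 ∧ ab.2 i = 0

/-- Paths of length `m` in the `k`-Bruhat order from `w` to `w'` with strictly
increasing labels. -/
def IncPaths (N k m : ℕ) [NeZero N] (w w' : Equiv.Perm (Fin N)) :
    Set ((ℕ → ℕ) × (ℕ → ℕ)) :=
  {ab | PathWit N k m w w' ab ∧
    ∀ i j, i < j → j < m → label w ab.1 ab.2 i < label w ab.1 ab.2 j}

/-- Paths of length `m` in the `k`-Bruhat order from `w` to `w'` with strictly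
decreasing labels. -/
def DecPaths (N k m : ℕ) [NeZero N] (w w' : Equiv.Perm (Fin N)) :
    Set ((ℕ → ℕ) × (ℕ → ℕ)) :=
  {ab | PathWit N k m w w' ab ∧
    ∀ i j, i < j → j < m → label w ab.1 ab.2 j < label w ab.1 ab.2 i}


/-- The cycle `(x₁ x₂ … x_r)` (sending `x₁ ↦ x₂ ↦ ⋯ ↦ x_r ↦ x₁`), as a product
of transpositions. -/
def cycleList (N : ℕ) [NeZero N] (l : List ℕ) : Equiv.Perm (Fin N) :=
  ((l.zip l.tail).map fun p => t N p.1 p.2).prod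

/-- The Grassmannian permutation `h[k;p,q]` of descent `k` and hook shape `(p,1^{q-1})`:
the `(p+q)`-cycle `(k-q+1  k-q+2 … k  k+p  k+p-1 … k+1)`. -/
def hookPerm (N k p q : ℕ) [NeZero N] : Equiv.Perm (Fin N) :=
  cycleList N (((List.range q).map fun i => k - q + 1 + i) ++
    ((List.range p).reverse.map fun i => k + 1 + i))

/-- `w|ₚ ∈ S_{N-1}`: delete row `p` and column `w(p)` from the permutation matrix of `w`. -/
def drop {N : ℕ} (w : Equiv.Perm (Fin (N + 1))) (p : Fin (N + 1)) : Equiv.Perm (Fin N) :=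
  Equiv.removeNone (((finSuccEquiv' p).symm.trans (w : Fin (N + 1) ≃ Fin (N + 1))).trans
    (finSuccEquiv' (w p)))

/-- `lam` is a partition with at most `k` parts (1-indexed parts `lam 1 ≥ lam 2 ≥ ⋯`,
normalized by `lam 0 = 0`). -/
def IsPartFun (k : ℕ) (lam : ℕ → ℕ) : Prop :=
  lam 0 = 0 ∧ (∀ j, 1 ≤ j → lam (j + 1) ≤ lam j) ∧ ∀ j, k < j → lam j = 0

/-- `h_d(x₁,…,x_k)` for an integer `d`, with `h_d = 0` for `d < 0`. -/
noncomputable def hPolyZ (N k : ℕ) (d : ℤ) : MvPolynomial (Fin N) ℤ :=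
  if 0 ≤ d then hPoly N k d.toNat else 0

/-- The Schur polynomial `s_λ(x₁,…,x_k)`, via the Jacobi–Trudi determinant
`det(h_{λᵢ+j-i})_{1 ≤ i,j ≤ k}`. -/
noncomputable def schurPoly (N k : ℕ) (lam : ℕ → ℕ) : MvPolynomial (Fin N) ℤ :=
  (Matrix.of fun i j : Fin k =>
    hPolyZ N k ((lam ((i : ℕ) + 1) : ℤ) + (j : ℕ) - (i : ℕ))).det

/-- `r_j = #{i : aᵢ = j}` (with `i` ranging over `0,…,m-1`, 0-indexed). -/
def rJ (a : ℕ → ℕ) (m j : ℕ) : ℕ := ((Finset.range m).filter fun i => a i = j).card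

/-- `μ_j = r_{j+1} + ⋯ + r_k`. -/
def muJ (a : ℕ → ℕ) (m k j : ℕ) : ℕ :=
  if j = 0 then 0 else ∑ j' ∈ Finset.Icc (j + 1) k, rJ a m j'

/-- `λ_j = μ_j + r_j`. -/
def lamJ (a : ℕ → ℕ) (m k j : ℕ) : ℕ :=
  if j = 0 then 0 else muJ a m k j + rJ a m j

/-- `d_j = #{i : bᵢ = N+1-j}` (with `i` ranging over `0,…,m-1`, 0-indexed). -/
def dJ (b : ℕ → ℕ) (m N j : ℕ) : ℕ :=
  ((Finset.range m).filter fun i => b i = N + 1 - j).card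

/-- `μ′_j = d_{j+1} + ⋯ + d_{N-k}`. -/
def muJ' (b : ℕ → ℕ) (m N k j : ℕ) : ℕ :=
  if j = 0 then 0 else ∑ j' ∈ Finset.Icc (j + 1) (N - k), dJ b m N j'

/-- `λ′_j = μ′_j + d_j`. -/
def lamJ' (b : ℕ → ℕ) (m N k j : ℕ) : ℕ :=
  if j = 0 then 0 else muJ' b m N k j + dJ b m N j

/-- The conjugate (transpose) partition: `νᵗ_j = #{i : νᵢ ≥ j}`, for `ν` with at
most `k` parts. -/
def conjPart (k : ℕ) (nu : ℕ → ℕ) (j : ℕ) : ℕ :=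
  if j = 0 then 0 else ((Finset.Icc 1 k).filter fun i => j ≤ nu i).card

/-- `wv` is the Grassmannian permutation of descent `k` and shape `nu`:
`wv(j) = j + ν_{k+1-j}` for `1 ≤ j ≤ k`, and `wv` is increasing on `{k+1,…,N}`. -/
def IsGrassOf (N k : ℕ) [NeZero N] (nu : ℕ → ℕ) (wv : Equiv.Perm (Fin N)) : Prop :=
  (∀ j, 1 ≤ j → j ≤ k → val wv j = j + nu (k + 1 - j)) ∧
  (∀ j, k < j → j < N → val wv j < val wv (j + 1))

/-- Paths of length `m` in the `k`-Bruhat order from `w` to `w'` whose labels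
increase strictly for the first `p` steps and decrease strictly thereafter
(positions `p, p+1, …, m` being decreasing, 1-indexed). -/
def IncDecPaths (N k m p : ℕ) [NeZero N] (w w' : Equiv.Perm (Fin N)) :
    Set ((ℕ → ℕ) × (ℕ → ℕ)) :=
  {ab | PathWit N k m w w' ab ∧
    (∀ i j, i < j → j < p → label w ab.1 ab.2 i < label w ab.1 ab.2 j) ∧
    (∀ i j, p - 1 ≤ i → i < j → j < m → label w ab.1 ab.2 j < label w ab.1 ab.2 i)}

/-- Paths of length `m` in the `k`-Bruhat order from `w` to `w'` whose labels
decrease strictly for the first `q` steps and increase strictly thereafter. -/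
def DecIncPaths (N k m q : ℕ) [NeZero N] (w w' : Equiv.Perm (Fin N)) :
    Set ((ℕ → ℕ) × (ℕ → ℕ)) :=
  {ab | PathWit N k m w w' ab ∧
    (∀ i j, i < j → j < q → label w ab.1 ab.2 j < label w ab.1 ab.2 i) ∧
    (∀ i j, q - 1 ≤ i → i < j → j < m → label w ab.1 ab.2 i < label w ab.1 ab.2 j)}




/-! ### Divided differences -/

/-- The divided difference attached to a pair of positions. -/
noncomputable def DD {N : ℕ} (p q : Fin N) (f : MvPolynomial (Fin N) ℤ) :
    MvPolynomial (Fin N) ℤ :=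
  if h : (X p - X q) ∣ (f - rename (⇑(Equiv.swap p q)) f) then
    h.choose
  else 0

theorem divDiff_eq_DD {N : ℕ} [NeZero N] (i : ℕ) (f : MvPolynomial (Fin N) ℤ) :
    divDiff i f = DD (pos N i) (pos N (i + 1)) f := rfl

theorem dvd_sub_rename {N : ℕ} (p q : Fin N) (f : MvPolynomial (Fin N) ℤ) :
    (X p - X q) ∣ (f - rename (⇑(Equiv.swap p q)) f) := by
  induction f using MvPolynomial.induction_on with
  | C a => simp
  | add f g hf hg =>
    have : f + g - rename (⇑(Equiv.swap p q)) (f + g) =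
      (f - rename (⇑(Equiv.swap p q)) f) + (g - rename (⇑(Equiv.swap p q)) g) := by
      rw [map_add]; ring
    rw [this]; exact dvd_add hf hg
  | mul_X f i hf =>
    have : f * X i - rename (⇑(Equiv.swap p q)) (f * X i) =
      (f - rename (⇑(Equiv.swap p q)) f) * X i +
        rename (⇑(Equiv.swap p q)) f * (X i - X (Equiv.swap p q i)) := by
      rw [map_mul, rename_X]; ring
    rw [this]
    refine dvd_add (hf.mul_right _) (Dvd.dvd.mul_left ?_ _)
    by_cases h1 : i = p
    · subst h1; simp
    · by_cases h2 : i = q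
      · subst h2
        rw [Equiv.swap_apply_right]
        exact ⟨-1, by ring⟩
      · rw [Equiv.swap_apply_of_ne_of_ne h1 h2]; simp

theorem DD_spec {N : ℕ} (p q : Fin N) (f : MvPolynomial (Fin N) ℤ) :
    (X p - X q) * DD p q f = f - rename (⇑(Equiv.swap p q)) f := by
  unfold DD
  rw [dif_pos (dvd_sub_rename p q f)]
  exact (dvd_sub_rename p q f).choose_spec.symm

theorem X_sub_ne {N : ℕ} {p q : Fin N} (h : p ≠ q) :
    (X p - X q : MvPolynomial (Fin N) ℤ) ≠ 0 := by
  intro h0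
  exact h (X_injective (sub_eq_zero.mp h0))

theorem DD_unique {N : ℕ} {p q : Fin N} (h : p ≠ q) {f g : MvPolynomial (Fin N) ℤ}
    (hg : (X p - X q) * g = f - rename (⇑(Equiv.swap p q)) f) : DD p q f = g :=
  mul_left_cancel₀ (X_sub_ne h) ((DD_spec p q f).trans hg.symm)

theorem DD_add {N : ℕ} {p q : Fin N} (h : p ≠ q) (f g : MvPolynomial (Fin N) ℤ) :
    DD p q (f + g) = DD p q f + DD p q g := by
  apply DD_unique h
  rw [mul_add, DD_spec, DD_spec, map_add]; ring

theorem DD_mul {N : ℕ} {p q : Fin N} (h : p ≠ q) (f g : MvPolynomial (Fin N) ℤ) :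
    DD p q (f * g) = rename (⇑(Equiv.swap p q)) f * DD p q g + DD p q f * g := by
  apply DD_unique h
  rw [map_mul]
  linear_combination (rename (⇑(Equiv.swap p q)) f) * DD_spec p q g + g * DD_spec p q f

theorem DD_of_symm {N : ℕ} {p q : Fin N} (h : p ≠ q) {f : MvPolynomial (Fin N) ℤ}
    (hf : rename (⇑(Equiv.swap p q)) f = f) : DD p q f = 0 := by
  apply DD_unique h
  rw [hf]; ring

theorem DD_symm_mul {N : ℕ} {p q : Fin N} (h : p ≠ q) {f : MvPolynomial (Fin N) ℤ}
    (hf : rename (⇑(Equiv.swap p q)) f = f) (g : MvPolynomial (Fin N) ℤ) :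
    DD p q (f * g) = f * DD p q g := by
  rw [DD_mul h, hf, DD_of_symm h hf]; ring

theorem DD_zero {N : ℕ} {p q : Fin N} (h : p ≠ q) : DD p q (0 : MvPolynomial (Fin N) ℤ) = 0 :=
  DD_of_symm h (by simp)

theorem rename_swap_swap {N : ℕ} (p q : Fin N) (f : MvPolynomial (Fin N) ℤ) :
    rename (⇑(Equiv.swap p q)) (rename (⇑(Equiv.swap p q)) f) = f := by
  rw [rename_rename]
  have : (⇑(Equiv.swap p q) ∘ ⇑(Equiv.swap p q)) = id := by
    funext x; simp
  rw [this, rename_id_apply]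

theorem rename_DD {N : ℕ} {p q : Fin N} (h : p ≠ q) (f : MvPolynomial (Fin N) ℤ) :
    rename (⇑(Equiv.swap p q)) (DD p q f) = DD p q f := by
  have h1 := congrArg (rename (⇑(Equiv.swap p q))) (DD_spec p q f)
  rw [map_mul, map_sub, map_sub, rename_X, rename_X, Equiv.swap_apply_left,
    Equiv.swap_apply_right, rename_swap_swap] at h1
  apply mul_left_cancel₀ (X_sub_ne h)
  linear_combination -h1 - DD_spec p q f

theorem DD_DD {N : ℕ} {p q : Fin N} (h : p ≠ q) (f : MvPolynomial (Fin N) ℤ) :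
    DD p q (DD p q f) = 0 := DD_of_symm h (rename_DD h f)

theorem DD_rename {N : ℕ} {p q : Fin N} (h : p ≠ q) (f : MvPolynomial (Fin N) ℤ) :
    DD p q (rename (⇑(Equiv.swap p q)) f) = - DD p q f := by
  apply DD_unique h
  rw [rename_swap_swap]
  linear_combination - DD_spec p q f

theorem DD_X_left {N : ℕ} {p q : Fin N} (h : p ≠ q) :
    DD p q (X p : MvPolynomial (Fin N) ℤ) = 1 := by
  apply DD_unique h; simp

theorem DD_X_right {N : ℕ} {p q : Fin N} (h : p ≠ q) :
    DD p q (X q : MvPolynomial (Fin N) ℤ) = -1 := by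
  apply DD_unique h; simp

theorem DD_X_other {N : ℕ} {p q j : Fin N} (h : p ≠ q) (h1 : j ≠ p) (h2 : j ≠ q) :
    DD p q (X j : MvPolynomial (Fin N) ℤ) = 0 :=
  DD_of_symm h (by rw [rename_X, Equiv.swap_apply_of_ne_of_ne h1 h2])

theorem rename_swap_comm {N : ℕ} {p q r s : Fin N} (h1 : p ≠ r) (h2 : p ≠ s) (h3 : q ≠ r)
    (h4 : q ≠ s) (f : MvPolynomial (Fin N) ℤ) :
    rename (⇑(Equiv.swap p q)) (rename (⇑(Equiv.swap r s)) f) =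
      rename (⇑(Equiv.swap r s)) (rename (⇑(Equiv.swap p q)) f) := by
  rw [rename_rename, rename_rename]
  congr 2
  funext x
  simp only [Function.comp, Equiv.swap_apply_def]
  grind

theorem DD_comm {N : ℕ} {p q r s : Fin N} (hpq : p ≠ q) (hrs : r ≠ s)
    (h1 : p ≠ r) (h2 : p ≠ s) (h3 : q ≠ r) (h4 : q ≠ s) (f : MvPolynomial (Fin N) ℤ) :
    DD p q (DD r s f) = DD r s (DD p q f) := by
  have e1 := DD_spec p q (DD r s f)
  have e2 := DD_spec r s (DD p q f)
  have e3 := DD_spec r s f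
  have e4 := DD_spec p q f
  have e5 := congrArg (rename (⇑(Equiv.swap p q))) e3
  have e6 := congrArg (rename (⇑(Equiv.swap r s))) e4
  rw [map_mul, map_sub, map_sub, rename_X, rename_X,
    Equiv.swap_apply_of_ne_of_ne h1.symm h3.symm,
    Equiv.swap_apply_of_ne_of_ne h2.symm h4.symm, rename_swap_comm h1 h2 h3 h4] at e5
  rw [map_mul, map_sub, map_sub, rename_X, rename_X,
    Equiv.swap_apply_of_ne_of_ne h1 h2, Equiv.swap_apply_of_ne_of_ne h3 h4] at e6
  apply mul_left_cancel₀ (X_sub_ne hpq)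
  apply mul_left_cancel₀ (X_sub_ne hrs)
  linear_combination (X r - X s) * e1 - (X p - X q) * e2 + e3 - e4 - e5 + e6

/-- The antisymmetrization formula underlying the braid relation. -/
theorem DD_braid_aux {N : ℕ} {p q r : Fin N} (hpq : p ≠ q) (hqr : q ≠ r) (hpr : p ≠ r)
    (f : MvPolynomial (Fin N) ℤ) :
    (X p - X q) * (X p - X r) * (X q - X r) * DD p q (DD q r (DD p q f)) =
      f - rename (⇑(Equiv.swap p q)) f - rename (⇑(Equiv.swap q r)) f
      + rename (⇑(Equiv.swap q r)) (rename (⇑(Equiv.swap p q)) f)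
      + rename (⇑(Equiv.swap p q)) (rename (⇑(Equiv.swap q r)) f)
      - rename (⇑(Equiv.swap p q)) (rename (⇑(Equiv.swap q r)) (rename (⇑(Equiv.swap p q)) f)) := by
  have e1 := DD_spec p q f
  have e2 := DD_spec q r (DD p q f)
  have e3 := DD_spec p q (DD q r (DD p q f))
  have e4 := congrArg (rename (⇑(Equiv.swap q r))) e1
  rw [map_mul, map_sub, map_sub, rename_X, rename_X,
    Equiv.swap_apply_of_ne_of_ne hpq hpr, Equiv.swap_apply_left] at e4
  have e5 : (X p - X q) * (X p - X r) * (X q - X r) * DD q r (DD p q f) =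
      (X p - X r) * (f - rename (⇑(Equiv.swap p q)) f) - (X p - X q) *
      (rename (⇑(Equiv.swap q r)) f -
        rename (⇑(Equiv.swap q r)) (rename (⇑(Equiv.swap p q)) f)) := by
    linear_combination (X p - X q) * (X p - X r) * e2 + (X p - X r) * e1 - (X p - X q) * e4
  have e6 := congrArg (rename (⇑(Equiv.swap p q))) e5
  simp only [map_mul, map_sub, rename_X, Equiv.swap_apply_left, Equiv.swap_apply_right,
    Equiv.swap_apply_of_ne_of_ne hpr.symm hqr.symm, rename_swap_swap] at e6
  apply mul_left_cancel₀ (X_sub_ne hpq)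
  linear_combination (X p - X q) * (X p - X r) * (X q - X r) * e3 + e5 + e6

theorem DD_swap_args {N : ℕ} {p q : Fin N} (h : p ≠ q) (f : MvPolynomial (Fin N) ℤ) :
    DD q p f = - DD p q f := by
  apply DD_unique h.symm
  rw [Equiv.swap_comm q p]
  linear_combination DD_spec p q f

theorem DD_neg {N : ℕ} {p q : Fin N} (h : p ≠ q) (f : MvPolynomial (Fin N) ℤ) :
    DD p q (-f) = - DD p q f := by
  apply DD_unique h
  rw [map_neg]
  linear_combination - DD_spec p q f

theorem DD_braid {N : ℕ} {p q r : Fin N} (hpq : p ≠ q) (hqr : q ≠ r) (hpr : p ≠ r)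
    (f : MvPolynomial (Fin N) ℤ) :
    DD p q (DD q r (DD p q f)) = DD q r (DD p q (DD q r f)) := by
  have h1 := DD_braid_aux hpq hqr hpr f
  have h2 := DD_braid_aux hqr.symm hpq.symm hpr.symm f
  have hb : rename (⇑(Equiv.swap p q)) (rename (⇑(Equiv.swap q r))
      (rename (⇑(Equiv.swap p q)) f)) = rename (⇑(Equiv.swap q r)) (rename (⇑(Equiv.swap p q))
      (rename (⇑(Equiv.swap q r)) f)) := by
    simp only [rename_rename]
    congr 2
    funext x
    simp only [Function.comp, Equiv.swap_apply_def]
    grind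
  rw [DD_swap_args hqr, DD_swap_args hpq, DD_swap_args hqr, DD_neg hpq, DD_neg hqr, DD_neg hqr,
    Equiv.swap_comm r q, Equiv.swap_comm q p] at h2
  apply mul_left_cancel₀ (X_sub_ne hpq)
  apply mul_left_cancel₀ (X_sub_ne hqr)
  apply mul_left_cancel₀ (X_sub_ne hpr)
  linear_combination h1 - h2 - hb


/-! ### Length -/

/-- The set of inversions. -/
def Inv {N : ℕ} (w : Equiv.Perm (Fin N)) : Finset (Fin N × Fin N) :=
  Finset.univ.filter fun p : Fin N × Fin N => p.1 < p.2 ∧ w p.2 < w p.1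

theorem len_eq {N : ℕ} (w : Equiv.Perm (Fin N)) : len w = (Inv w).card := rfl

theorem mem_Inv {N : ℕ} (w : Equiv.Perm (Fin N)) (x : Fin N × Fin N) :
    x ∈ Inv w ↔ x.1 < x.2 ∧ w x.2 < w x.1 := by
  unfold Inv
  rw [Finset.mem_filter]
  simp

theorem swap_adj_lt {N : ℕ} {p q x y : Fin N} (hpq : (q : ℕ) = p + 1) (hxy : x < y)
    (h : ¬ (x = p ∧ y = q)) : Equiv.swap p q x < Equiv.swap p q y := by
  simp only [Equiv.swap_apply_def, Fin.lt_def, Fin.ext_iff] at *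
  split_ifs <;> omega

/-- The map comparing inversions of `w t` and of `w`. -/
def invMap {N : ℕ} (c d : Fin N) (x : Fin N × Fin N) : Fin N × Fin N :=
  if Equiv.swap c d x.1 < Equiv.swap c d x.2 then (Equiv.swap c d x.1, Equiv.swap c d x.2) else x

theorem invMap_mem {N : ℕ} (w : Equiv.Perm (Fin N)) {c d : Fin N} (hcd : c < d)
    (hw : w d < w c) {x : Fin N × Fin N} (hx : x ∈ Inv (w * Equiv.swap c d)) :
    invMap c d x ∈ Inv w := by
  rw [mem_Inv] at hx ⊢
  obtain ⟨x1, x2⟩ := x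
  unfold invMap
  simp only [Equiv.Perm.mul_apply] at hx ⊢
  split_ifs with h
  · exact ⟨h, hx.2⟩
  · refine ⟨hx.1, ?_⟩
    simp only [Equiv.swap_apply_def] at hx h ⊢
    grind

theorem invMap_inj {N : ℕ} (c d : Fin N) (x y : Fin N × Fin N)
    (hx : x.1 < x.2) (hy : y.1 < y.2)
    (h : invMap c d x = invMap c d y) : x = y := by
  obtain ⟨x1, x2⟩ := x
  obtain ⟨y1, y2⟩ := y
  unfold invMap at h
  simp only at h hx hy
  split_ifs at h with h1 h2 h2
  · simpa using h
  · rw [Prod.mk.injEq] at h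
    rw [← h.1, ← h.2] at h2
    simp at h2
    exact absurd hx (not_lt.mpr h2)
  · rw [Prod.mk.injEq] at h
    rw [h.1, h.2] at h1
    simp at h1
    exact absurd hy (not_lt.mpr h1)
  · exact h

theorem invMap_ne {N : ℕ} (w : Equiv.Perm (Fin N)) {c d : Fin N} (hcd : c < d)
    (hw : w d < w c) {x : Fin N × Fin N} (hx : x ∈ Inv (w * Equiv.swap c d)) :
    invMap c d x ≠ (c, d) := by
  rw [mem_Inv] at hx
  obtain ⟨x1, x2⟩ := x
  unfold invMap
  simp only [Equiv.Perm.mul_apply] at hx ⊢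
  split_ifs with h
  · simp only [Equiv.swap_apply_def] at hx h ⊢
    grind
  · simp only [Equiv.swap_apply_def] at hx h ⊢
    grind

theorem invMap_ne' {N : ℕ} (w : Equiv.Perm (Fin N)) {c d e : Fin N} (hce : c < e) (hed : e < d)
    (hw : w d < w e) (hw' : w e < w c) {x : Fin N × Fin N}
    (hx : x ∈ Inv (w * Equiv.swap c d)) :
    invMap c d x ≠ (c, e) := by
  rw [mem_Inv] at hx
  obtain ⟨x1, x2⟩ := x
  unfold invMap
  simp only [Equiv.Perm.mul_apply] at hx ⊢
  split_ifs with h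
  · simp only [Equiv.swap_apply_def] at hx h ⊢
    grind
  · simp only [Equiv.swap_apply_def] at hx h ⊢
    grind

theorem len_swap_lt {N : ℕ} (w : Equiv.Perm (Fin N)) {c d : Fin N} (hcd : c < d)
    (hw : w d < w c) : len (w * Equiv.swap c d) < len w := by
  rw [len_eq, len_eq]
  have hmem : (c, d) ∈ Inv w := by rw [mem_Inv]; exact ⟨hcd, hw⟩
  rw [← Finset.card_erase_add_one hmem, Nat.lt_succ_iff]
  apply Finset.card_le_card_of_injOn (invMap c d)
  · intro x hx
    exact Finset.mem_coe.mpr (Finset.mem_erase.mpr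
      ⟨invMap_ne w hcd hw hx, invMap_mem w hcd hw hx⟩)
  · intro x hx y hy h
    exact invMap_inj c d x y ((mem_Inv _ _).mp hx).1 ((mem_Inv _ _).mp hy).1 h

theorem len_swap_between {N : ℕ} (w : Equiv.Perm (Fin N)) {c d e : Fin N} (hce : c < e)
    (hed : e < d) (hw : w d < w e) (hw' : w e < w c) :
    len (w * Equiv.swap c d) + 2 ≤ len w := by
  rw [len_eq, len_eq]
  have hcd := hce.trans hed
  have hwcd := hw.trans hw'
  have hmem : (c, d) ∈ Inv w := by rw [mem_Inv]; exact ⟨hcd, hwcd⟩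
  have hmem2 : (c, e) ∈ (Inv w).erase (c, d) := by
    rw [Finset.mem_erase, mem_Inv]
    exact ⟨by intro h; rw [Prod.mk.injEq] at h; exact hed.ne h.2, hce, hw'⟩
  rw [← Finset.card_erase_add_one hmem, ← Finset.card_erase_add_one hmem2]
  have : (Inv (w * Equiv.swap c d)).card ≤ (((Inv w).erase (c, d)).erase (c, e)).card := by
    apply Finset.card_le_card_of_injOn (invMap c d)
    · intro x hx
      exact Finset.mem_coe.mpr (Finset.mem_erase.mpr ⟨invMap_ne' w hce hed hw hw' hx,
        Finset.mem_erase.mpr ⟨invMap_ne w hcd hwcd hx, invMap_mem w hcd hwcd hx⟩⟩)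
    · intro x hx y hy h
      exact invMap_inj c d x y ((mem_Inv _ _).mp hx).1 ((mem_Inv _ _).mp hy).1 h
  omega

/-- If multiplying by a transposition drops the length by exactly one, it is a cover. -/
theorem cover_of_len {N : ℕ} (w : Equiv.Perm (Fin N)) {c d : Fin N} (hcd : c < d)
    (h : len (w * Equiv.swap c d) + 1 = len w) :
    w d < w c ∧ ∀ e, c < e → e < d → ¬ (w d < w e ∧ w e < w c) := by
  have h1 : w d < w c := by
    by_contra hcon
    have hne : w c ≠ w d := fun h => hcd.ne (w.injective h)
    have hlt : w c < w d := lt_of_le_of_ne (not_lt.mp hcon) hne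
    have := len_swap_lt (w * Equiv.swap c d) hcd (by simpa using hlt)
    rw [mul_assoc, Equiv.swap_mul_self, mul_one] at this
    omega
  refine ⟨h1, fun e hce hed ⟨h2, h3⟩ => ?_⟩
  have := len_swap_between w hce hed h2 h3
  omega

theorem adj_ne {N : ℕ} {p q : Fin N} (hpq : (q : ℕ) = p + 1) : p ≠ q := by
  intro h; rw [h] at hpq; omega

theorem adj_lt {N : ℕ} {p q : Fin N} (hpq : (q : ℕ) = p + 1) : p < q := by
  rw [Fin.lt_def]; omega

theorem len_adj {N : ℕ} (w : Equiv.Perm (Fin N)) {p q : Fin N} (hpq : (q : ℕ) = p + 1)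
    (hw : w q < w p) : len (w * Equiv.swap p q) + 1 = len w := by
  apply le_antisymm
  · exact len_swap_lt w (adj_lt hpq) hw
  · rw [len_eq, len_eq]
    have hmem : (p, q) ∈ Inv w := by rw [mem_Inv]; exact ⟨adj_lt hpq, hw⟩
    rw [← Finset.card_erase_add_one hmem, add_le_add_iff_right]
    apply Finset.card_le_card_of_injOn (fun x => (Equiv.swap p q x.1, Equiv.swap p q x.2))
    · intro x hx
      have hx := Finset.mem_erase.mp (Finset.mem_coe.mp hx)
      rw [mem_Inv] at hx
      apply Finset.mem_coe.mpr
      rw [mem_Inv]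
      refine ⟨swap_adj_lt hpq hx.2.1 (fun h => hx.1 (Prod.ext h.1 h.2)), ?_⟩
      simpa using hx.2.2
    · intro x hx y hy h
      simpa [Prod.ext_iff] using h

theorem len_adj_up {N : ℕ} (w : Equiv.Perm (Fin N)) {p q : Fin N} (hpq : (q : ℕ) = p + 1)
    (hw : w p < w q) : len (w * Equiv.swap p q) = len w + 1 := by
  have := len_adj (w * Equiv.swap p q) hpq (by simpa using hw)
  rw [mul_assoc, Equiv.swap_mul_self, mul_one] at this
  exact this.symm

theorem desc_or_asc {N : ℕ} (w : Equiv.Perm (Fin N)) {p q : Fin N} (hpq : (q : ℕ) = p + 1) :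
    w q < w p ∨ w p < w q := by
  rcases lt_trichotomy (w q) (w p) with h | h | h
  · exact Or.inl h
  · exact absurd (w.injective h).symm (adj_ne hpq)
  · exact Or.inr h

/-- Lifting property: a cover below `w` by a different transposition keeps the descent. -/
theorem cover_desc {N : ℕ} (w : Equiv.Perm (Fin N)) {p q c d : Fin N} (hpq : (q : ℕ) = p + 1)
    (hw : w q < w p) (hcd : c < d) (hne : ¬ (c = p ∧ d = q))
    (h : len (w * Equiv.swap c d) + 1 = len w) :
    (w * Equiv.swap c d) q < (w * Equiv.swap c d) p := by
  obtain ⟨h1, h2⟩ := cover_of_len w hcd h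
  simp only [Equiv.Perm.mul_apply]
  have hq := h2 q
  have hp := h2 p
  have i1 : w q ≠ w d ∨ q = d := by
    by_cases hh : q = d
    · exact Or.inr hh
    · exact Or.inl (fun h => hh (w.injective h))
  have i2 : w p ≠ w c ∨ p = c := by
    by_cases hh : p = c
    · exact Or.inr hh
    · exact Or.inl (fun h => hh (w.injective h))
  have k1 : p = c → q ≠ d → q < d := by
    intro e1 e2; subst e1; rw [Fin.lt_def] at *; have := Fin.val_ne_of_ne e2; omega
  have k2 : q = d → p ≠ c → c < p := by
    intro e1 e2; subst e1; rw [Fin.lt_def] at *; have := Fin.val_ne_of_ne e2; omega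
  have k3 := adj_lt hpq
  simp only [Equiv.swap_apply_def]
  grind

/-- A permutation without adjacent descents is the identity. -/
theorem eq_one_of_no_desc {N : ℕ} (w : Equiv.Perm (Fin N))
    (h : ∀ p q : Fin N, (q : ℕ) = p + 1 → ¬ w q < w p) : w = 1 := by
  have hm : StrictMono w := by
    cases N with
    | zero => intro a; exact a.elim0
    | succ n =>
      rw [Fin.strictMono_iff_lt_succ]
      intro i
      rcases desc_or_asc w (p := i.castSucc) (q := i.succ) (by simp) with h1 | h1
      · exact absurd h1 (h _ _ (by simp))
      · exact h1
  ext i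
  have := congrFun (Subsingleton.elim (α := Fin N ≃o Fin N)
    (StrictMono.orderIsoOfSurjective w hm w.surjective) (OrderIso.refl _) ▸ rfl :
      (w : Fin N → Fin N) = (OrderIso.refl (Fin N))) i
  rw [this]; rfl

theorem len_one {N : ℕ} : len (1 : Equiv.Perm (Fin N)) = 0 := by
  rw [len_eq, Finset.card_eq_zero, Finset.eq_empty_iff_forall_notMem]
  intro x hx
  rw [mem_Inv] at hx
  exact absurd hx.1 (not_lt.mpr hx.2.le)

theorem len_le {N : ℕ} (w : Equiv.Perm (Fin N)) : len w ≤ N * N := by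
  rw [len_eq]
  calc _ ≤ (Finset.univ : Finset (Fin N × Fin N)).card := Finset.card_le_card (Finset.subset_univ _)
    _ = N * N := by simp


/-! ### The operators `∂_w` -/

theorem pos_adj {N : ℕ} [NeZero N] {i : ℕ} (h1 : 1 ≤ i) (h2 : i < N) :
    ((pos N (i + 1) : Fin N) : ℕ) = (pos N i : ℕ) + 1 := by
  simp only [pos]
  rw [Nat.mod_eq_of_lt (by omega), Nat.mod_eq_of_lt (by omega)]
  omega

theorem pos_succ {N : ℕ} [NeZero N] (p : Fin N) : pos N ((p : ℕ) + 1) = p := by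
  apply Fin.ext
  simp only [pos]
  rw [Nat.mod_eq_of_lt (by omega)]
  omega

theorem val_lt_iff {N : ℕ} [NeZero N] (w : Equiv.Perm (Fin N)) (i j : ℕ) :
    val w i < val w j ↔ w (pos N i) < w (pos N j) := by
  simp only [val, Fin.lt_def]; omega

/-- The reduced word algorithm either stops at the identity or removes a descent. -/
theorem redWordAux_succ {N : ℕ} [NeZero N] (fuel : ℕ) (w : Equiv.Perm (Fin N)) :
    (w = 1 ∧ redWordAux N (fuel + 1) w = []) ∨
    ∃ i, 1 ≤ i ∧ i < N ∧ w (pos N (i + 1)) < w (pos N i) ∧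
      (∀ f, redWordAux N (f + 1) w = redWordAux N f (w * t N i (i + 1)) ++ [i]) := by
  rcases hf : ((List.range (N - 1)).map (· + 1)).find?
    (fun i => decide (val w (i + 1) < val w i)) with _ | i
  · left
    constructor
    · apply eq_one_of_no_desc
      intro p q hpq hlt
      rw [List.find?_eq_none] at hf
      have := hf ((p : ℕ) + 1) (List.mem_map.mpr ⟨p, List.mem_range.mpr (by omega), rfl⟩)
      rw [decide_eq_true_eq, val_lt_iff, pos_succ, ← hpq, pos_succ] at this
      exact this hlt
    · rw [redWordAux, hf]
  · right
    have h1 := List.find?_some hf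
    have h2 := List.mem_of_find?_eq_some hf
    rw [List.mem_map] at h2
    obtain ⟨a, ha, hai⟩ := h2
    rw [List.mem_range] at ha
    rw [decide_eq_true_eq, val_lt_iff] at h1
    refine ⟨i, by omega, by omega, h1, fun f => ?_⟩
    rw [redWordAux, hf]

theorem redWordAux_fuel {N : ℕ} [NeZero N] (fuel : ℕ) : ∀ (w : Equiv.Perm (Fin N)),
    len w ≤ fuel → redWordAux N fuel w = redWordAux N (len w) w := by
  induction fuel with
  | zero => intro w hw; rw [Nat.le_zero.mp hw]
  | succ n ih =>
    intro w hw
    rcases redWordAux_succ n w with ⟨h1, h2⟩ | ⟨i, h1, h2, h3, h4⟩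
    · rw [h2, h1, len_one]; rfl
    · have hl := len_adj w (pos_adj h1 h2) h3
      rw [h4, ← hl, h4]
      rw [ih (w * t N i (i + 1)) (by unfold t; omega)]
      rfl

/-- `∂_w` along the canonical reduced word. -/
noncomputable def dw {N : ℕ} [NeZero N] (w : Equiv.Perm (Fin N)) (f : MvPolynomial (Fin N) ℤ) :
    MvPolynomial (Fin N) ℤ :=
  divDiffWord (redWord N w) f

theorem dw_step {N : ℕ} [NeZero N] (w : Equiv.Perm (Fin N)) :
    (w = 1 ∧ ∀ f, dw w f = f) ∨
    ∃ p q : Fin N, (q : ℕ) = p + 1 ∧ w q < w p ∧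
      ∀ f, dw w f = dw (w * Equiv.swap p q) (DD p q f) := by
  have hN : N * N = (N * N - 1) + 1 := by
    have := Nat.pos_of_ne_zero (NeZero.ne N)
    have := Nat.mul_pos this this
    omega
  rcases redWordAux_succ (N * N - 1) w with ⟨h1, h2⟩ | ⟨i, h1, h2, h3, h4⟩
  · left
    refine ⟨h1, fun f => ?_⟩
    unfold dw redWord
    rw [hN, h2]; rfl
  · right
    refine ⟨pos N i, pos N (i + 1), pos_adj h1 h2, h3, fun f => ?_⟩
    unfold dw redWord
    have hl := len_adj w (pos_adj h1 h2) h3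
    have hle := len_le w
    have e1 : redWordAux N (N * N) w = redWordAux N (N * N - 1) (w * t N i (i + 1)) ++ [i] := by
      conv_lhs => rw [hN]
      rw [h4]
    rw [e1, redWordAux_fuel _ _ (by unfold t; omega), redWordAux_fuel (N * N) _ (len_le _)]
    unfold divDiffWord
    rw [List.foldr_append]
    rfl

theorem dw_one {N : ℕ} [NeZero N] (f : MvPolynomial (Fin N) ℤ) : dw 1 f = f := by
  rcases dw_step (1 : Equiv.Perm (Fin N)) with h | ⟨p, q, h1, h2, -⟩
  · exact h.2 f
  · exact absurd h2 (not_lt.mpr (adj_lt h1).le)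

theorem swap_braid {N : ℕ} {p q r : Fin N} (hpq : p ≠ q) (hqr : q ≠ r) (hpr : p ≠ r) :
    Equiv.swap p q * Equiv.swap q r * Equiv.swap p q =
      Equiv.swap q r * Equiv.swap p q * Equiv.swap q r := by
  apply Equiv.ext
  intro x
  simp only [Equiv.Perm.mul_apply, Equiv.swap_apply_def]
  grind

theorem swap_comm' {N : ℕ} {p q r s : Fin N} (h1 : p ≠ r) (h2 : p ≠ s) (h3 : q ≠ r)
    (h4 : q ≠ s) : Equiv.swap p q * Equiv.swap r s = Equiv.swap r s * Equiv.swap p q := by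
  apply Equiv.ext
  intro x
  simp only [Equiv.Perm.mul_apply, Equiv.swap_apply_def]
  grind

theorem dw_braid_case {N : ℕ} [NeZero N] (n : ℕ)
    (ih : ∀ (w : Equiv.Perm (Fin N)), len w < n → ∀ (p q : Fin N), (q : ℕ) = p + 1 →
      w q < w p → ∀ f, dw w f = dw (w * Equiv.swap p q) (DD p q f))
    (w : Equiv.Perm (Fin N)) (hn : len w = n) {p q r : Fin N} (hpq : (q : ℕ) = p + 1)
    (hqr : (r : ℕ) = q + 1) (h1 : w q < w p) (h2 : w r < w q) (f : MvPolynomial (Fin N) ℤ) :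
    dw (w * Equiv.swap p q) (DD p q f) = dw (w * Equiv.swap q r) (DD q r f) := by
  have npq := adj_ne hpq
  have nqr := adj_ne hqr
  have npr : p ≠ r := by intro h; rw [h] at hpq; omega
  have l1 := len_adj w hpq h1
  have l2 := len_adj w hqr h2
  have d1 : (w * Equiv.swap p q) r < (w * Equiv.swap p q) q := by
    simp only [Equiv.Perm.mul_apply, Equiv.swap_apply_right,
      Equiv.swap_apply_of_ne_of_ne npr.symm nqr.symm]
    exact h2.trans h1
  have d2 : (w * Equiv.swap q r) q < (w * Equiv.swap q r) p := by
    simp only [Equiv.Perm.mul_apply, Equiv.swap_apply_left,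
      Equiv.swap_apply_of_ne_of_ne npq npr]
    exact h2.trans h1
  have l3 := len_adj _ hqr d1
  have l4 := len_adj _ hpq d2
  have d3 : (w * Equiv.swap p q * Equiv.swap q r) q < (w * Equiv.swap p q * Equiv.swap q r) p := by
    simp only [Equiv.Perm.mul_apply, Equiv.swap_apply_left,
      Equiv.swap_apply_of_ne_of_ne npq npr, Equiv.swap_apply_of_ne_of_ne npr.symm nqr.symm]
    exact h2
  have d4 : (w * Equiv.swap q r * Equiv.swap p q) r < (w * Equiv.swap q r * Equiv.swap p q) q := by
    simp only [Equiv.Perm.mul_apply, Equiv.swap_apply_right,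
      Equiv.swap_apply_of_ne_of_ne npq npr, Equiv.swap_apply_of_ne_of_ne npr.symm nqr.symm]
    exact h1
  rw [ih _ (by omega) q r hqr d1, ih _ (by omega) p q hpq d3,
    ih _ (by omega) p q hpq d2, ih _ (by omega) q r hqr d4, DD_braid npq nqr npr]
  congr 1
  rw [mul_assoc, mul_assoc, mul_assoc, mul_assoc, ← mul_assoc (Equiv.swap p q),
    swap_braid npq nqr npr, mul_assoc]

theorem dw_desc {N : ℕ} [NeZero N] (w : Equiv.Perm (Fin N)) (p q : Fin N) (hpq : (q : ℕ) = p + 1)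
    (hw : w q < w p) (f : MvPolynomial (Fin N) ℤ) :
    dw w f = dw (w * Equiv.swap p q) (DD p q f) := by
  induction hn : len w using Nat.strong_induction_on generalizing w p q f with
  | _ n ih =>
  have ih' : ∀ (w : Equiv.Perm (Fin N)), len w < n → ∀ (p q : Fin N), (q : ℕ) = p + 1 →
      w q < w p → ∀ f, dw w f = dw (w * Equiv.swap p q) (DD p q f) :=
    fun w hl p q h1 h2 f => ih (len w) hl w p q h1 h2 f rfl
  rcases dw_step w with ⟨h, -⟩ | ⟨p', q', hpq', hw', hs⟩
  · subst h
    exact absurd hw (not_lt.mpr (adj_lt hpq).le)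
  · by_cases hpp : p' = p
    · have : q' = q := by apply Fin.ext; rw [hpq, hpq', hpp]
      rw [hs, hpp, this]
    · rw [hs]
      by_cases hA : q = p'
      · subst hA
        exact (dw_braid_case n ih' w hn hpq hpq' hw hw' f).symm
      · by_cases hB : q' = p
        · subst hB
          exact dw_braid_case n ih' w hn hpq' hpq hw' hw f
        · have hC : q' ≠ q := by
            intro h; apply hpp; apply Fin.ext; rw [h] at hpq'; omega
          have l1 := len_adj w hpq hw
          have l2 := len_adj w hpq' hw'
          have e1 : p' ≠ q := fun h => hA h.symm
          have d1 : (w * Equiv.swap p' q') q < (w * Equiv.swap p' q') p := by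
            simp only [Equiv.Perm.mul_apply,
              Equiv.swap_apply_of_ne_of_ne (Ne.symm e1) (Ne.symm hC),
              Equiv.swap_apply_of_ne_of_ne (Ne.symm hpp) (Ne.symm hB)]
            exact hw
          have d2 : (w * Equiv.swap p q) q' < (w * Equiv.swap p q) p' := by
            simp only [Equiv.Perm.mul_apply, Equiv.swap_apply_of_ne_of_ne hB hC,
              Equiv.swap_apply_of_ne_of_ne hpp e1]
            exact hw'
          rw [ih' _ (by omega) p q hpq d1, ih' _ (by omega) p' q' hpq' d2,
            DD_comm (adj_ne hpq) (adj_ne hpq') (Ne.symm hpp) (Ne.symm hB) (Ne.symm e1)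
              (Ne.symm hC), mul_assoc, mul_assoc,
            swap_comm' hpp e1 hB hC]

theorem dw_DD_asc {N : ℕ} [NeZero N] (w : Equiv.Perm (Fin N)) {p q : Fin N}
    (hpq : (q : ℕ) = p + 1) (hw : w p < w q) (f : MvPolynomial (Fin N) ℤ) :
    dw w (DD p q f) = dw (w * Equiv.swap p q) f := by
  rw [dw_desc (w * Equiv.swap p q) p q hpq (by simpa using hw), mul_assoc, Equiv.swap_mul_self,
    mul_one]

theorem dw_rec {N : ℕ} [NeZero N] {C : Equiv.Perm (Fin N) → Prop} (h1 : C 1)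
    (h2 : ∀ (w : Equiv.Perm (Fin N)) (p q : Fin N), (q : ℕ) = p + 1 → w q < w p →
      C (w * Equiv.swap p q) → C w) (w : Equiv.Perm (Fin N)) : C w := by
  induction hn : len w using Nat.strong_induction_on generalizing w with
  | _ n ih =>
  by_cases hw : ∃ p q : Fin N, (q : ℕ) = p + 1 ∧ w q < w p
  · obtain ⟨p, q, hpq, hlt⟩ := hw
    have := len_adj w hpq hlt
    exact h2 w p q hpq hlt (ih _ (by omega) _ rfl)
  · have : w = 1 := by
      apply eq_one_of_no_desc
      intro p q hpq hlt
      exact hw ⟨p, q, hpq, hlt⟩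
    rw [this]; exact h1

theorem dw_zero {N : ℕ} [NeZero N] (w : Equiv.Perm (Fin N)) : dw w 0 = 0 := by
  induction w using dw_rec with
  | h1 => exact dw_one 0
  | h2 w p q hpq hw ih => rw [dw_desc w p q hpq hw, DD_zero (adj_ne hpq), ih]

theorem dw_DD_desc {N : ℕ} [NeZero N] (w : Equiv.Perm (Fin N)) {p q : Fin N}
    (hpq : (q : ℕ) = p + 1) (hw : w q < w p) (f : MvPolynomial (Fin N) ℤ) :
    dw w (DD p q f) = 0 := by
  rw [dw_desc w p q hpq hw, DD_DD (adj_ne hpq), dw_zero]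

theorem dw_add {N : ℕ} [NeZero N] (w : Equiv.Perm (Fin N)) (f g : MvPolynomial (Fin N) ℤ) :
    dw w (f + g) = dw w f + dw w g := by
  induction w using dw_rec generalizing f g with
  | h1 => simp only [dw_one]
  | h2 w p q hpq hw ih => 
    rw [dw_desc w p q hpq hw, dw_desc w p q hpq hw f, dw_desc w p q hpq hw g,
      DD_add (adj_ne hpq), ih]

/-- `∂_w` as an additive map. -/
noncomputable def dwHom {N : ℕ} [NeZero N] (w : Equiv.Perm (Fin N)) :
    MvPolynomial (Fin N) ℤ →+ MvPolynomial (Fin N) ℤ where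
  toFun := dw w
  map_zero' := dw_zero w
  map_add' := dw_add w

theorem dwHom_apply {N : ℕ} [NeZero N] (w : Equiv.Perm (Fin N)) (f : MvPolynomial (Fin N) ℤ) :
    dwHom w f = dw w f := rfl

theorem dw_left {N : ℕ} [NeZero N] (y : Equiv.Perm (Fin N)) {p q : Fin N}
    (hpq : (q : ℕ) = p + 1) (hy : y⁻¹ p < y⁻¹ q) (f : MvPolynomial (Fin N) ℤ) :
    dw (Equiv.swap p q * y) f = DD p q (dw y f) := by
  induction y using dw_rec generalizing f with
  | h1 =>
    rw [mul_one, dw_one, dw_desc (Equiv.swap p q) p q hpq (by simpa using adj_lt hpq),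
      Equiv.swap_mul_self, dw_one]
  | h2 y a b hab hyab ih =>
    have h1 : (Equiv.swap p q * y) b < (Equiv.swap p q * y) a := by
      simp only [Equiv.Perm.mul_apply]
      apply swap_adj_lt hpq hyab
      rintro ⟨e1, e2⟩
      rw [← e1, ← e2] at hy
      simp only [Equiv.Perm.inv_def, Equiv.symm_apply_apply] at hy
      exact absurd (adj_lt hab) (not_lt.mpr hy.le)
    rw [dw_desc _ a b hab h1, mul_assoc, ih, ← dw_desc y a b hab hyab]
    rw [mul_inv_rev, Equiv.swap_inv]
    simp only [Equiv.Perm.mul_apply]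
    apply swap_adj_lt hab hy
    rintro ⟨e1, e2⟩
    rw [← e1, ← e2] at hyab
    simp only [Equiv.Perm.inv_def, Equiv.apply_symm_apply] at hyab
    exact absurd (adj_lt hpq) (not_lt.mpr hyab.le)

/-! ### Recursion for Schubert polynomials -/

theorem schubert_asc {N : ℕ} [NeZero N] (w : Equiv.Perm (Fin N)) {p q : Fin N}
    (hpq : (q : ℕ) = p + 1) (hw : w p < w q) :
    schubertPoly N w = DD p q (schubertPoly N (w * Equiv.swap p q)) := by
  change dw (w⁻¹ * w0 N) _ = DD p q (dw ((w * Equiv.swap p q)⁻¹ * w0 N) _)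
  rw [← dw_left _ hpq]
  · rw [mul_inv_rev, Equiv.swap_inv, ← mul_assoc, ← mul_assoc, Equiv.swap_mul_self, one_mul]
  · simp only [mul_inv_rev, inv_inv, Equiv.Perm.mul_apply, Equiv.swap_apply_left,
      Equiv.swap_apply_right]
    change Fin.rev _ < Fin.rev _
    rw [Fin.rev_lt_rev]; exact hw

theorem schubert_desc {N : ℕ} [NeZero N] (w : Equiv.Perm (Fin N)) {p q : Fin N}
    (hpq : (q : ℕ) = p + 1) (hw : w q < w p) :
    DD p q (schubertPoly N w) = schubertPoly N (w * Equiv.swap p q) := by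
  rw [schubert_asc (w * Equiv.swap p q) hpq (by simpa using hw), mul_assoc, Equiv.swap_mul_self,
    mul_one]

theorem schubert_asc_zero {N : ℕ} [NeZero N] (w : Equiv.Perm (Fin N)) {p q : Fin N}
    (hpq : (q : ℕ) = p + 1) (hw : w p < w q) :
    DD p q (schubertPoly N w) = 0 := by
  rw [schubert_asc w hpq hw, DD_DD (adj_ne hpq)]

theorem schubert_w0 {N : ℕ} [NeZero N] : schubertPoly N (w0 N) = staircase N := by
  change dw ((w0 N)⁻¹ * w0 N) _ = _
  rw [inv_mul_cancel, dw_one]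

/-- Descending induction on permutations, from `w₀`. -/
theorem asc_rec {N : ℕ} {C : Equiv.Perm (Fin N) → Prop} (h1 : C (w0 N))
    (h2 : ∀ (w : Equiv.Perm (Fin N)), (∃ p q : Fin N, (q : ℕ) = p + 1 ∧ w p < w q) →
      (∀ p q : Fin N, (q : ℕ) = p + 1 → w p < w q → C (w * Equiv.swap p q)) → C w)
    (w : Equiv.Perm (Fin N)) : C w := by
  induction hn : N * N - len w using Nat.strong_induction_on generalizing w with
  | _ n ih =>
  by_cases hw : ∃ p q : Fin N, (q : ℕ) = p + 1 ∧ w p < w q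
  · apply h2 w hw
    intro p q hpq hlt
    have e1 := len_adj_up w hpq hlt
    have e2 := len_le (w * Equiv.swap p q)
    exact ih _ (by omega) _ rfl
  · have : w0 N * w = 1 := by
      apply eq_one_of_no_desc
      intro p q hpq hlt
      change Fin.rev _ < Fin.rev _ at hlt
      rw [Fin.rev_lt_rev] at hlt
      exact hw ⟨p, q, hpq, hlt⟩
    have h3 : w = w0 N := by
      rw [eq_inv_of_mul_eq_one_right this]
      rfl
    rw [h3]; exact h1


/-! ### Codes and dominant permutations -/

/-- The Lehmer code. -/
noncomputable def code {N : ℕ} (w : Equiv.Perm (Fin N)) (p : Fin N) : ℕ :=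
  (Finset.univ.filter fun x : Fin N => p < x ∧ w x < w p).card

theorem len_eq_code {N : ℕ} (w : Equiv.Perm (Fin N)) : len w = ∑ p, code w p := by
  rw [len_eq]
  unfold Inv
  rw [Finset.card_filter, ← Finset.univ_product_univ, Finset.sum_product]
  refine Finset.sum_congr rfl (fun p _ => ?_)
  rw [code, Finset.card_filter]

theorem code_le {N : ℕ} (w : Equiv.Perm (Fin N)) (p : Fin N) : code w p ≤ N - 1 - p := by
  rw [← Fin.card_Ioi]
  apply Finset.card_le_card
  intro x hx
  rw [Finset.mem_filter] at hx
  exact Finset.mem_Ioi.mpr hx.2.1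

theorem code_w0 {N : ℕ} (p : Fin N) : code (w0 N) p = N - 1 - p := by
  rw [← Fin.card_Ioi, code]
  congr 1
  ext x
  rw [Finset.mem_filter, Finset.mem_Ioi]
  refine ⟨fun h => h.2.1, fun h => ⟨Finset.mem_univ _, h, ?_⟩⟩
  change Fin.rev x < Fin.rev p
  rw [Fin.rev_lt_rev]; exact h

theorem code_swap_left {N : ℕ} (w : Equiv.Perm (Fin N)) {p q : Fin N} (hpq : (q : ℕ) = p + 1)
    (hw : w p < w q) : code (w * Equiv.swap p q) p = code w q + 1 := by
  unfold code
  have : (Finset.univ.filter fun x : Fin N => p < x ∧ (w * Equiv.swap p q) x <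
      (w * Equiv.swap p q) p) =
      insert q (Finset.univ.filter fun x : Fin N => q < x ∧ w x < w q) := by
    ext x
    simp only [Finset.mem_filter, Finset.mem_univ, true_and, Finset.mem_insert,
      Equiv.Perm.mul_apply, Equiv.swap_apply_left]
    by_cases hx : x = q
    · subst hx
      simp [adj_lt hpq, hw]
    · by_cases hx' : x = p
      · subst hx'
        simp [hx, (adj_lt hpq).le]
      · rw [Equiv.swap_apply_of_ne_of_ne hx' hx]
        have : p < x ↔ q < x := by
          rw [Fin.lt_def, Fin.lt_def]
          have := Fin.val_ne_of_ne hx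
          omega
        rw [this]; simp [hx]
  rw [this, Finset.card_insert_of_notMem]
  simp

theorem code_swap_right {N : ℕ} (w : Equiv.Perm (Fin N)) {p q : Fin N} (hpq : (q : ℕ) = p + 1)
    (hw : w p < w q) : code (w * Equiv.swap p q) q = code w p := by
  unfold code
  congr 1
  ext x
  simp only [Finset.mem_filter, Finset.mem_univ, true_and,
    Equiv.Perm.mul_apply, Equiv.swap_apply_right]
  by_cases hx : x = q
  · subst hx
    simp [hw.le]
  · by_cases hx' : x = p
    · subst hx'
      simp [(adj_lt hpq).le]
    · rw [Equiv.swap_apply_of_ne_of_ne hx' hx]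
      have : p < x ↔ q < x := by
        rw [Fin.lt_def, Fin.lt_def]
        have := Fin.val_ne_of_ne hx
        omega
      rw [this]

theorem code_swap_other {N : ℕ} (w : Equiv.Perm (Fin N)) {p q r : Fin N} (hpq : (q : ℕ) = p + 1)
    (hp : r ≠ p) (hq : r ≠ q) : code (w * Equiv.swap p q) r = code w r := by
  unfold code
  apply Finset.card_bij (fun x _ => Equiv.swap p q x)
  · intro x hx
    simp only [Finset.mem_filter, Finset.mem_univ, true_and, Equiv.Perm.mul_apply,
      Equiv.swap_apply_of_ne_of_ne hp hq] at hx ⊢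
    refine ⟨?_, hx.2⟩
    have := swap_adj_lt hpq hx.1 (fun h => hp h.1)
    rwa [Equiv.swap_apply_of_ne_of_ne hp hq] at this
  · intro x _ y _ h
    exact (Equiv.swap p q).injective h
  · intro x hx
    refine ⟨Equiv.swap p q x, ?_, Equiv.swap_apply_self _ _ _⟩
    simp only [Finset.mem_filter, Finset.mem_univ, true_and, Equiv.Perm.mul_apply,
      Equiv.swap_apply_of_ne_of_ne hp hq, Equiv.swap_apply_self] at hx ⊢
    refine ⟨?_, hx.2⟩
    have := swap_adj_lt hpq hx.1 (fun h => hp h.1)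
    rwa [Equiv.swap_apply_of_ne_of_ne hp hq] at this

theorem code_asc_le {N : ℕ} (w : Equiv.Perm (Fin N)) {p q : Fin N} (hpq : (q : ℕ) = p + 1)
    (hw : w p < w q) : code w p ≤ code w q := by
  apply Finset.card_le_card
  intro x hx
  simp only [Finset.mem_filter, Finset.mem_univ, true_and] at hx ⊢
  refine ⟨?_, hx.2.trans hw⟩
  have : x ≠ q := by
    intro h; rw [h] at hx; exact absurd hw (not_lt.mpr hx.2.le)
  have := Fin.val_ne_of_ne this
  have h1 := hx.1
  rw [Fin.lt_def] at *
  omega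

theorem code_desc_lt {N : ℕ} (w : Equiv.Perm (Fin N)) {p q : Fin N} (hpq : (q : ℕ) = p + 1)
    (hw : w q < w p) : code w q < code w p := by
  apply Finset.card_lt_card
  rw [Finset.ssubset_iff_of_subset]
  · refine ⟨q, ?_, ?_⟩
    · simp [adj_lt hpq, hw]
    · simp
  · intro x hx
    simp only [Finset.mem_filter, Finset.mem_univ, true_and] at hx ⊢
    exact ⟨(adj_lt hpq).trans hx.1, hx.2.trans hw⟩

theorem schubert_dominant {N : ℕ} [NeZero N] (w : Equiv.Perm (Fin N)) 
    (h : ∀ p q : Fin N, (q : ℕ) = p + 1 → code w q ≤ code w p) :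
    schubertPoly N w = ∏ p, X p ^ code w p := by
  induction w using asc_rec with
  | h1 =>
    rw [schubert_w0, staircase]
    simp only [code_w0]
  | h2 w hex ih =>
    have hex' : ∃ n : ℕ, ∃ p q : Fin N, (p : ℕ) = n ∧ (q : ℕ) = p + 1 ∧ w p < w q := by
      obtain ⟨p, q, h1, h2⟩ := hex
      exact ⟨p, p, q, rfl, h1, h2⟩
    obtain ⟨p, q, hpn, hpq, hw⟩ := Nat.find_spec hex'
    have hmin : ∀ o : Fin N, (p : ℕ) = o + 1 → w p < w o := by
      intro o ho
      rcases desc_or_asc w ho with h1 | h1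
      · exact h1
      · have := Nat.find_min' hex' ⟨o, p, rfl, ho, h1⟩
        omega
    have heq : code w p = code w q := le_antisymm (code_asc_le w hpq hw) (h p q hpq)
    have c1 := code_swap_left w hpq hw
    have c2 := code_swap_right w hpq hw
    have hih := ih p q hpq hw (by
      intro a b hab
      by_cases hbp : b = p
      · subst hbp
        rw [c1, ← heq, code_swap_other w hpq (adj_ne hab) (by
          intro h; rw [h] at hab; omega)]
        exact code_desc_lt w hab (hmin a hab)
      · by_cases hap : a = p
        · subst hap
          have : b = q := by apply Fin.ext; omega
          subst this
          rw [c1, c2]; omega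
        · by_cases haq : a = q
          · subst haq
            rw [c2, code_swap_other w hpq hbp (adj_ne hab).symm, heq]
            exact h _ _ hab
          · have hbq : b ≠ q := by
              intro h; apply hap; apply Fin.ext; rw [h] at hab; omega
            rw [code_swap_other w hpq hap haq, code_swap_other w hpq hbp hbq]
            exact h _ _ hab)
    rw [schubert_asc w hpq hw, hih]
    have e : (∏ r, X r ^ code (w * Equiv.swap p q) r : MvPolynomial (Fin N) ℤ) =
        (∏ r, X r ^ code w r) * X p := by
      have : (X p : MvPolynomial (Fin N) ℤ) = ∏ r, (if r = p then X p else 1) := by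
        rw [Finset.prod_ite_eq' Finset.univ p]; simp
      rw [this, ← Finset.prod_mul_distrib]
      refine Finset.prod_congr rfl (fun r _ => ?_)
      by_cases hp : r = p
      · subst hp
        rw [if_pos rfl, c1, heq, pow_succ]
      · rw [if_neg hp, mul_one]
        by_cases hq : r = q
        · subst hq; rw [c2, heq]
        · rw [code_swap_other w hpq hp hq]
    rw [e, DD_symm_mul (adj_ne hpq), DD_X_left (adj_ne hpq), mul_one]
    rw [map_prod]
    simp only [map_pow, rename_X]
    rw [← Equiv.prod_comp (Equiv.swap p q)]
    refine Finset.prod_congr rfl (fun r _ => ?_)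
    rw [Equiv.swap_apply_self]
    congr 1
    by_cases hp : r = p
    · subst hp; rw [Equiv.swap_apply_left, heq]
    · by_cases hq : r = q
      · subst hq; rw [Equiv.swap_apply_right, heq]
      · rw [Equiv.swap_apply_of_ne_of_ne hp hq]

theorem schubert_one {N : ℕ} [NeZero N] : schubertPoly N 1 = 1 := by
  have h0 : ∀ p : Fin N, code (1 : Equiv.Perm (Fin N)) p = 0 := by
    intro p
    have h1 : ∑ p, code (1 : Equiv.Perm (Fin N)) p = 0 := by rw [← len_eq_code, len_one]
    rw [Finset.sum_eq_zero_iff] at h1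
    exact h1 p (Finset.mem_univ _)
  rw [schubert_dominant 1 (by intro p q _; rw [h0, h0])]
  simp [h0]

/-! ### The augmentation ideal -/

/-- The augmentation ideal. -/
noncomputable def mm (N : ℕ) : Ideal (MvPolynomial (Fin N) ℤ) :=
  RingHom.ker (constantCoeff : MvPolynomial (Fin N) ℤ →+* ℤ)

theorem rename_mem_mm {N : ℕ} (σ : Equiv.Perm (Fin N)) (d : ℕ) {f : MvPolynomial (Fin N) ℤ}
    (hf : f ∈ mm N ^ d) : rename (⇑σ) f ∈ mm N ^ d := by
  have h1 : (mm N).map (rename (⇑σ) : MvPolynomial (Fin N) ℤ →ₐ[ℤ] _).toRingHom ≤ mm N := by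
    rw [Ideal.map_le_iff_le_comap]
    intro g hg
    rw [Ideal.mem_comap]
    rw [mm, RingHom.mem_ker] at hg ⊢
    simpa [constantCoeff_rename] using hg
  have h2 := Ideal.mem_map_of_mem (rename (⇑σ) : MvPolynomial (Fin N) ℤ →ₐ[ℤ] _).toRingHom hf
  rw [Ideal.map_pow] at h2
  exact Ideal.pow_right_mono h1 d h2

theorem DD_mem_mm {N : ℕ} {p q : Fin N} (h : p ≠ q) (d : ℕ) : ∀ {f : MvPolynomial (Fin N) ℤ},
    f ∈ mm N ^ (d + 1) → DD p q f ∈ mm N ^ d := by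
  induction d with
  | zero => intro f _; rw [pow_zero]; simp
  | succ d ih =>
    intro f hf
    rw [pow_succ] at hf
    induction hf using Submodule.mul_induction_on' with
    | mem_mul_mem g hg k hk =>
      rw [DD_mul h]
      apply Ideal.add_mem
      · exact Ideal.mul_mem_right _ _ (rename_mem_mm _ _ hg)
      · rw [pow_succ]
        exact Ideal.mul_mem_mul (ih hg) hk
    | add x _ y _ hx hy =>
      rw [DD_add h]
      exact Ideal.add_mem _ hx hy

theorem staircase_mem {N : ℕ} : staircase N ∈ mm N ^ (∑ i : Fin N, (N - 1 - (i : ℕ))) := by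
  rw [staircase, ← Finset.prod_pow_eq_pow_sum]
  apply Ideal.prod_mem_prod
  intro i _
  apply Ideal.pow_mem_pow
  rw [mm, RingHom.mem_ker, constantCoeff_X]

theorem schubert_mem {N : ℕ} [NeZero N] (w : Equiv.Perm (Fin N)) :
    schubertPoly N w ∈ mm N ^ len w := by
  induction w using asc_rec with
  | h1 =>
    rw [schubert_w0, len_eq_code]
    simp only [code_w0]
    exact staircase_mem
  | h2 w hex ih =>
    obtain ⟨p, q, hpq, hw⟩ := hex
    rw [schubert_asc w hpq hw]
    apply DD_mem_mm (adj_ne hpq)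
    rw [← len_adj_up w hpq hw]
    exact ih p q hpq hw

theorem constantCoeff_schubert {N : ℕ} [NeZero N] (w : Equiv.Perm (Fin N)) :
    constantCoeff (schubertPoly N w) = if 1 = w then 1 else 0 := by
  split_ifs with h
  · rw [← h, schubert_one, map_one]
  · have h1 : 1 ≤ len w := by
      by_contra h2
      apply h
      symm
      apply eq_one_of_no_desc
      intro p q hpq hlt
      have := len_adj w hpq hlt
      omega
    have h2 := Ideal.pow_le_pow_right h1 (schubert_mem w)
    rw [pow_one, mm, RingHom.mem_ker] at h2
    exact h2

/-! ### The dual functionals -/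

/-- The functional `f ↦ (∂_u f)(0)`. -/
noncomputable def Dc {N : ℕ} [NeZero N] (u : Equiv.Perm (Fin N)) :
    MvPolynomial (Fin N) ℤ →+ ℤ :=
  (constantCoeff : MvPolynomial (Fin N) ℤ →+* ℤ).toAddMonoidHom.comp (dwHom u)

theorem Dc_apply {N : ℕ} [NeZero N] (u : Equiv.Perm (Fin N)) (f : MvPolynomial (Fin N) ℤ) :
    Dc u f = constantCoeff (dw u f) := rfl

theorem Dc_schubert {N : ℕ} [NeZero N] (u w : Equiv.Perm (Fin N)) :
    Dc u (schubertPoly N w) = if u = w then 1 else 0 := by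
  induction u using dw_rec generalizing w with
  | h1 => rw [Dc_apply, dw_one, constantCoeff_schubert]
  | h2 u p q hpq hu ih =>
    rw [Dc_apply, dw_desc u p q hpq hu]
    rcases desc_or_asc w hpq with hw | hw
    · rw [schubert_desc w hpq hw, ← Dc_apply, ih]
      simp only [mul_left_inj]
    · rw [schubert_asc_zero w hpq hw, dw_zero, map_zero, if_neg]
      rintro rfl
      exact absurd hw (not_lt.mpr hu.le)

theorem dw_symm_mul {N : ℕ} [NeZero N] (u : Equiv.Perm (Fin N)) {f : MvPolynomial (Fin N) ℤ}
    (hf : f.IsSymmetric) (g : MvPolynomial (Fin N) ℤ) : dw u (f * g) = f * dw u g := by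
  induction u using dw_rec generalizing g with
  | h1 => rw [dw_one, dw_one]
  | h2 u p q hpq hu ih =>
    rw [dw_desc u p q hpq hu, DD_symm_mul (adj_ne hpq) (hf _), ih, ← dw_desc u p q hpq hu]

theorem Dc_symIdeal' {N : ℕ} [NeZero N] (u : Equiv.Perm (Fin N)) {f : MvPolynomial (Fin N) ℤ}
    (hf : f ∈ symIdeal N) : ∀ g, Dc u (f * g) = 0 := by
  unfold symIdeal at hf
  induction hf using Submodule.span_induction with
  | mem x hx =>
    intro g
    rw [Dc_apply, dw_symm_mul u hx.1 g, map_mul, hx.2, zero_mul]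
  | zero => intro g; rw [zero_mul]; exact map_zero _
  | add x y _ _ hx hy => intro g; rw [add_mul, map_add, hx, hy, add_zero]
  | smul a x hx hax =>
    intro g
    rw [smul_eq_mul, mul_assoc, mul_left_comm]
    exact hax _

theorem Dc_symIdeal {N : ℕ} [NeZero N] (u : Equiv.Perm (Fin N)) {f : MvPolynomial (Fin N) ℤ}
    (hf : f ∈ symIdeal N) : Dc u f = 0 := by
  have := Dc_symIdeal' u hf 1
  rwa [mul_one] at this


/-! ### Monk's rule -/

/-- Sign of a pair of positions. -/
noncomputable def eps {N : ℕ} (j c : Fin N) : ℤ := if j < c then 1 else if c < j then -1 else 0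

theorem eps_swap {N : ℕ} {p q j c : Fin N} (hpq : (q : ℕ) = p + 1)
    (h1 : ¬ (j = p ∧ c = q)) (h2 : ¬ (j = q ∧ c = p)) :
    eps (Equiv.swap p q j) (Equiv.swap p q c) = eps j c := by
  unfold eps
  rcases lt_trichotomy j c with h | h | h
  · have := swap_adj_lt hpq h h1
    rw [if_pos this, if_pos h]
  · subst h; simp
  · have := swap_adj_lt hpq h (fun h => h2 ⟨h.2, h.1⟩)
    rw [if_neg (not_lt.mpr this.le), if_pos this, if_neg (not_lt.mpr h.le), if_pos h]

/-- A term of Monk's rule. -/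
noncomputable def MT {N : ℕ} [NeZero N] (w : Equiv.Perm (Fin N)) (j c : Fin N)
    (g : MvPolynomial (Fin N) ℤ) : MvPolynomial (Fin N) ℤ :=
  if len (w * Equiv.swap j c) + 1 = len w then eps j c • dw (w * Equiv.swap j c) g else 0

theorem cover_desc' {N : ℕ} (w : Equiv.Perm (Fin N)) {p q c d : Fin N} (hpq : (q : ℕ) = p + 1)
    (hw : w q < w p) (hcd : c ≠ d) (hne : ¬ (c = p ∧ d = q)) (hne' : ¬ (c = q ∧ d = p))
    (h : len (w * Equiv.swap c d) + 1 = len w) :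
    (w * Equiv.swap c d) q < (w * Equiv.swap c d) p := by
  rcases lt_or_gt_of_ne hcd with h1 | h1
  · exact cover_desc w hpq hw h1 hne h
  · rw [Equiv.swap_comm] at h ⊢
    exact cover_desc w hpq hw h1 (fun h => hne' ⟨h.2, h.1⟩) h

theorem MT_step {N : ℕ} [NeZero N] (w : Equiv.Perm (Fin N)) {p q : Fin N} (hpq : (q : ℕ) = p + 1)
    (hw : w q < w p) (j c : Fin N) (g : MvPolynomial (Fin N) ℤ) :
    MT w j c g = MT (w * Equiv.swap p q) (Equiv.swap p q j) (Equiv.swap p q c) (DD p q g) +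
      (if c = Equiv.swap p q j then dw (w * Equiv.swap p q) (DD p q (X j) * g) else 0) := by
  have hne := adj_ne hpq
  have hl := len_adj w hpq hw
  have hlt := adj_lt hpq
  have key : w * Equiv.swap p q * Equiv.swap (Equiv.swap p q j) (Equiv.swap p q c) =
      w * Equiv.swap j c * Equiv.swap p q := by
    rw [Equiv.swap_apply_apply]
    simp [mul_assoc]
  by_cases hA : j = p ∧ c = q
  · obtain ⟨rfl, rfl⟩ := hA
    unfold MT
    rw [key, if_pos hl, if_neg (by simp [mul_assoc]; omega), Equiv.swap_apply_left, if_pos rfl,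
      DD_X_left hne, eps, if_pos hlt]
    simp
  by_cases hB : j = q ∧ c = p
  · obtain ⟨rfl, rfl⟩ := hB
    unfold MT
    rw [key, Equiv.swap_comm j c, if_pos hl, if_neg (by simp [mul_assoc]; omega),
      Equiv.swap_apply_right, if_pos rfl,
      DD_X_right hne, eps, if_neg (not_lt.mpr hlt.le), if_pos hlt]
    rw [neg_one_mul, ← dwHom_apply, ← dwHom_apply, map_neg]
    simp
  have hE : (if c = Equiv.swap p q j then dw (w * Equiv.swap p q) (DD p q (X j) * g) else 0) = 0 := by
    split_ifs with h
    · have h1 : j ≠ p := fun h1 => hA ⟨h1, by rw [h, h1, Equiv.swap_apply_left]⟩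
      have h2 : j ≠ q := fun h1 => hB ⟨h1, by rw [h, h1, Equiv.swap_apply_right]⟩
      rw [DD_X_other hne h1 h2, zero_mul, dw_zero]
    · rfl
  rw [hE, add_zero]
  unfold MT
  rw [key, eps_swap hpq hA hB]
  by_cases hjc : j = c
  · subst hjc; simp [eps]
  rcases desc_or_asc (w * Equiv.swap j c) hpq with hu | hu
  · have := len_adj _ hpq hu
    rw [← dw_desc _ p q hpq hu]
    congr 1
    apply propext
    constructor <;> intro h <;> omega
  · rw [dw_DD_desc _ hpq (by simpa using hu), smul_zero, ite_self, if_neg]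
    intro h
    exact absurd hu (not_lt.mpr (cover_desc' w hpq hw hjc hA hB h).le)

theorem dw_monk {N : ℕ} [NeZero N] (w : Equiv.Perm (Fin N)) (j : Fin N)
    (g : MvPolynomial (Fin N) ℤ) :
    dw w (X j * g) = X (w j) * dw w g + ∑ c, MT w j c g := by
  induction w using dw_rec generalizing j g with
  | h1 =>
    have : ∀ c, MT 1 j c g = 0 := by
      intro c
      unfold MT
      rw [if_neg]
      rw [len_one]; omega
    simp [dw_one, this]
  | h2 w p q hpq hw ih =>
    have hne := adj_ne hpq
    rw [Finset.sum_congr rfl (fun c _ => MT_step w hpq hw j c g), Finset.sum_add_distrib,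
      Finset.sum_ite_eq' Finset.univ, if_pos (Finset.mem_univ _),
      Equiv.sum_comp (Equiv.swap p q) (fun c => MT (w * Equiv.swap p q) (Equiv.swap p q j) c
        (DD p q g))]
    rw [dw_desc w p q hpq hw, DD_mul hne, dw_add, rename_X, ih, dw_desc w p q hpq hw g]
    simp only [Equiv.Perm.mul_apply, Equiv.swap_apply_self]
    rw [add_assoc]

theorem Dc_monk {N : ℕ} [NeZero N] (w : Equiv.Perm (Fin N)) (j : Fin N)
    (g : MvPolynomial (Fin N) ℤ) :
    Dc w (X j * g) = ∑ c, if len (w * Equiv.swap j c) + 1 = len w then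
      eps j c * Dc (w * Equiv.swap j c) g else 0 := by
  rw [Dc_apply, dw_monk, map_add, map_mul, constantCoeff_X, zero_mul, zero_add, map_sum]
  refine Finset.sum_congr rfl (fun c _ => ?_)
  unfold MT
  split_ifs
  · rw [map_zsmul, Dc_apply, smul_eq_mul]
  · simp


/-! ### Chains -/

/-- Coefficient of `𝔖_u` in `x_J 𝔖_w`. -/
noncomputable def FJ {N : ℕ} [NeZero N] (u : Equiv.Perm (Fin N)) (J : List (Fin N))
    (w : Equiv.Perm (Fin N)) : ℤ :=
  Dc u ((J.map X).prod * schubertPoly N w)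

theorem FJ_nil {N : ℕ} [NeZero N] (u w : Equiv.Perm (Fin N)) :
    FJ u [] w = if u = w then 1 else 0 := by
  rw [FJ, List.map_nil, List.prod_nil, one_mul, Dc_schubert]

theorem FJ_cons {N : ℕ} [NeZero N] (u : Equiv.Perm (Fin N)) (j : Fin N) (J : List (Fin N))
    (w : Equiv.Perm (Fin N)) :
    FJ u (j :: J) w = ∑ c, if len (u * Equiv.swap j c) + 1 = len u then
      eps j c * FJ (u * Equiv.swap j c) J w else 0 := by
  rw [FJ, List.map_cons, List.prod_cons, mul_assoc, Dc_monk]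
  rfl

theorem FJ_cons_ne {N : ℕ} [NeZero N] (u : Equiv.Perm (Fin N)) (j : Fin N) (J : List (Fin N))
    (w : Equiv.Perm (Fin N)) (h : FJ u (j :: J) w ≠ 0) :
    ∃ c, len (u * Equiv.swap j c) + 1 = len u ∧ FJ (u * Equiv.swap j c) J w ≠ 0 := by
  rw [FJ_cons] at h
  obtain ⟨c, _, hc⟩ := Finset.exists_ne_zero_of_sum_ne_zero h
  refine ⟨c, ?_, ?_⟩
  · by_contra h1
    rw [if_neg h1] at hc
    exact hc rfl
  · intro h1
    rw [h1, mul_zero, ite_self] at hc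
    exact hc rfl

theorem FJ_len {N : ℕ} [NeZero N] (u : Equiv.Perm (Fin N)) (J : List (Fin N))
    (w : Equiv.Perm (Fin N)) (h : FJ u J w ≠ 0) : len u = len w + J.length := by
  induction J generalizing u with
  | nil =>
    rw [FJ_nil] at h
    have : u = w := by
      by_contra h1
      exact h (if_neg h1)
    simp [this]
  | cons j J ih =>
    obtain ⟨c, h1, h2⟩ := FJ_cons_ne u j J w h
    have := ih _ h2
    rw [List.length_cons]
    omega

/-- Positions `≥ k` where `u` and `w` differ. -/
noncomputable def MM {N : ℕ} (k : ℕ) (w u : Equiv.Perm (Fin N)) : Finset (Fin N) :=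
  Finset.univ.filter fun b => k ≤ (b : ℕ) ∧ u b ≠ w b

theorem MM_step {N : ℕ} (k : ℕ) (w u : Equiv.Perm (Fin N)) (j c : Fin N) (hj : (j : ℕ) < k) :
    MM k w u ⊆ insert c (MM k w (u * Equiv.swap j c)) := by
  intro b hb
  rw [MM, Finset.mem_filter] at hb
  rw [Finset.mem_insert]
  by_cases hbc : b = c
  · exact Or.inl hbc
  · right
    rw [MM, Finset.mem_filter]
    refine ⟨Finset.mem_univ _, hb.2.1, ?_⟩
    rw [Equiv.Perm.mul_apply, Equiv.swap_apply_of_ne_of_ne _ hbc]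
    · exact hb.2.2
    · intro h; rw [h] at hb; omega

theorem FJ_MM {N : ℕ} [NeZero N] (k : ℕ) (u : Equiv.Perm (Fin N)) (J : List (Fin N))
    (w : Equiv.Perm (Fin N)) (hJ : ∀ j ∈ J, (j : ℕ) < k) (h : FJ u J w ≠ 0) :
    (MM k w u).card ≤ J.length := by
  induction J generalizing u with
  | nil =>
    rw [FJ_nil] at h
    have : u = w := by
      by_contra h1
      exact h (if_neg h1)
    simp [this, MM]
  | cons j J ih =>
    obtain ⟨c, h1, h2⟩ := FJ_cons_ne u j J w h
    have h3 := ih _ (fun j hj => hJ j (List.mem_cons_of_mem _ hj)) h2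
    have h4 := Finset.card_le_card (MM_step k w u j c (hJ j List.mem_cons_self))
    have h5 := Finset.card_insert_le c (MM k w (u * Equiv.swap j c))
    rw [List.length_cons]
    omega

/-- Product of transpositions. -/
def prodL {N : ℕ} (L : List (Fin N × Fin N)) : Equiv.Perm (Fin N) :=
  (L.map fun x => Equiv.swap x.1 x.2).prod

theorem prodL_append {N : ℕ} (L L' : List (Fin N × Fin N)) :
    prodL (L ++ L') = prodL L * prodL L' := by
  simp [prodL]

theorem prodL_single {N : ℕ} (x : Fin N × Fin N) : prodL [x] = Equiv.swap x.1 x.2 := by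
  simp [prodL]

/-- Admissible lists of transpositions. -/
def OKL {N : ℕ} (k : ℕ) (L : List (Fin N × Fin N)) : Prop :=
  (∀ x ∈ L, (x.1 : ℕ) < k ∧ k ≤ (x.2 : ℕ)) ∧ (L.map Prod.snd).Nodup

theorem prodL_fix {N : ℕ} {k : ℕ} {L : List (Fin N × Fin N)}
    (hL : ∀ x ∈ L, (x.1 : ℕ) < k ∧ k ≤ (x.2 : ℕ)) {b : Fin N} (hb : k ≤ (b : ℕ))
    (hb' : b ∉ L.map Prod.snd) : prodL L b = b := by
  induction L with
  | nil => simp [prodL]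
  | cons x L ih =>
    rw [List.map_cons, List.mem_cons, not_or] at hb'
    have h1 : prodL (x :: L) b = Equiv.swap x.1 x.2 (prodL L b) := by
      simp [prodL]
    rw [h1, ih (fun y hy => hL y (List.mem_cons_of_mem _ hy)) hb'.2,
      Equiv.swap_apply_of_ne_of_ne _ hb'.1]
    intro h
    have := (hL x List.mem_cons_self).1
    rw [← h] at this; omega

theorem OKL_append {N : ℕ} {k : ℕ} {L L' : List (Fin N × Fin N)} (h : OKL k (L ++ L')) :
    OKL k L ∧ OKL k L' ∧ ∀ x ∈ L, ∀ y ∈ L', x.2 ≠ y.2 := by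
  obtain ⟨h1, h2⟩ := h
  rw [List.map_append, List.nodup_append] at h2
  refine ⟨⟨fun x hx => h1 x (List.mem_append_left _ hx), h2.1⟩,
    ⟨fun x hx => h1 x (List.mem_append_right _ hx), h2.2.1⟩, ?_⟩
  intro x hx y hy
  exact h2.2.2 _ (List.mem_map_of_mem hx) _ (List.mem_map_of_mem hy)

theorem prodL_move {N : ℕ} {k : ℕ} {L : List (Fin N × Fin N)}
    (hL : OKL k L) {b : Fin N} (hb' : b ∈ L.map Prod.snd) : prodL L b ≠ b := by
  rw [List.mem_map] at hb'
  obtain ⟨x, hx, rfl⟩ := hb'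
  obtain ⟨L1, L2, rfl⟩ := List.append_of_mem hx
  obtain ⟨o1, o2, o3⟩ := OKL_append hL
  obtain ⟨hx1, hx2⟩ := o2.1 x List.mem_cons_self
  have o4 := o2.2
  rw [List.map_cons, List.nodup_cons] at o4
  have e1 : prodL L2 x.2 = x.2 := prodL_fix (fun y hy => o2.1 y (List.mem_cons_of_mem _ hy)) hx2 o4.1
  have e2 : prodL L1 x.2 = x.2 := by
    apply prodL_fix o1.1 hx2
    rw [List.mem_map]
    rintro ⟨y, hy, hyx⟩
    exact o3 y hy x List.mem_cons_self hyx
  have e3 : prodL (L1 ++ x :: L2) x.2 = prodL L1 x.1 := by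
    rw [prodL_append, Equiv.Perm.mul_apply]
    have : prodL (x :: L2) x.2 = Equiv.swap x.1 x.2 (prodL L2 x.2) := by simp [prodL]
    rw [this, e1, Equiv.swap_apply_right]
  rw [e3]
  intro h
  have := (prodL L1).injective (h.trans e2.symm)
  rw [this] at hx1; omega

theorem MM_prodL {N : ℕ} {k : ℕ} {L : List (Fin N × Fin N)} (hL : OKL k L)
    (w : Equiv.Perm (Fin N)) : (MM k w (w * prodL L)).card = L.length := by
  have : MM k w (w * prodL L) = (L.map Prod.snd).toFinset := by
    ext b
    rw [MM, Finset.mem_filter, List.mem_toFinset]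
    constructor
    · rintro ⟨-, h1, h2⟩
      by_contra h3
      apply h2
      rw [Equiv.Perm.mul_apply, prodL_fix hL.1 h1 h3]
    · intro h
      refine ⟨Finset.mem_univ _, ?_, ?_⟩
      · rw [List.mem_map] at h
        obtain ⟨x, hx, rfl⟩ := h
        exact (hL.1 x hx).2
      · intro h2
        exact prodL_move hL h (w.injective h2)
  rw [this, List.toFinset_card_of_nodup hL.2, List.length_map]

theorem prodL_split {N : ℕ} {k : ℕ} {L : List (Fin N × Fin N)} (hL : OKL k L) {j c : Fin N}
    (hj : (j : ℕ) < k) (hc : k ≤ (c : ℕ)) (h : prodL L j = c) :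
    ∃ L1 L2, L = L1 ++ (j, c) :: L2 ∧ prodL L * Equiv.swap j c = prodL (L1 ++ L2) := by
  induction L using List.reverseRecOn with
  | nil =>
    simp only [prodL, List.map_nil, List.prod_nil, Equiv.Perm.one_apply] at h
    rw [h] at hj; omega
  | append_singleton L x ih =>
    obtain ⟨o1, o2, o3⟩ := OKL_append hL
    obtain ⟨hx1, hx2⟩ := o2.1 x List.mem_cons_self
    rw [prodL_append, prodL_single, Equiv.Perm.mul_apply] at h
    by_cases hxj : x.1 = j
    · rw [hxj, Equiv.swap_apply_left, prodL_fix o1.1 hx2] at h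
      · refine ⟨L, [], ?_, ?_⟩
        · rw [← h, ← hxj]
        · rw [prodL_append, prodL_single, hxj, h, mul_assoc, Equiv.swap_mul_self, mul_one,
            List.append_nil]
      · rw [List.mem_map]
        rintro ⟨y, hy, hyx⟩
        exact o3 y hy x List.mem_cons_self hyx
    · rw [Equiv.swap_apply_of_ne_of_ne (fun h => hxj h.symm)
        (by intro h; rw [h] at hj; omega)] at h
      obtain ⟨L1, L2, e1, e2⟩ := ih o1 h
      refine ⟨L1, L2 ++ [x], by rw [e1]; simp, ?_⟩
      have h4 : (j, c) ∈ L := by rw [e1]; simp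
      have h5 := o3 _ h4 x List.mem_cons_self
      have hcomm : Equiv.swap x.1 x.2 * Equiv.swap j c = Equiv.swap j c * Equiv.swap x.1 x.2 := by
        apply Equiv.Perm.Disjoint.commute
        apply Equiv.Perm.disjoint_swap_swap
        have n1 : x.1 ≠ c := by intro h; rw [h] at hx1; omega
        have n2 : x.2 ≠ j := by intro h; rw [h] at hx2; omega
        have n3 : x.1 ≠ x.2 := by intro h; rw [h] at hx1; omega
        have n4 : j ≠ c := by intro h; rw [h] at hj; omega
        have n5 : x.2 ≠ c := fun h => h5 h.symm
        simp [n1, n2, n3, n4, n5, hxj]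
      rw [← List.append_assoc, prodL_append, prodL_single, prodL_append, ← e2, prodL_single,
        mul_assoc, hcomm, mul_assoc]

theorem OKL_perm {N : ℕ} {k : ℕ} {L L' : List (Fin N × Fin N)} (hL : OKL k L)
    (h : L'.Sublist L) : OKL k L' :=
  ⟨fun x hx => hL.1 x (h.subset hx), hL.2.sublist (h.map _)⟩

theorem FJ_survive {N : ℕ} [NeZero N] {k : ℕ} {L : List (Fin N × Fin N)} (hL : OKL k L)
    (w : Equiv.Perm (Fin N)) {J : List (Fin N)} (hJ : ∀ j ∈ J, (j : ℕ) < k)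
    (hlen : L.length = J.length + 1) {j c : Fin N} (hj : (j : ℕ) < k)
    (h : FJ (w * prodL L * Equiv.swap j c) J w ≠ 0) : prodL L j = c ∧ k ≤ (c : ℕ) := by
  have h1 := FJ_MM k _ J w hJ h
  have h2 := MM_prodL hL w
  have hs := MM_step k w (w * prodL L) j c hj
  have hc : c ∉ MM k w (w * prodL L * Equiv.swap j c) := by
    intro hc
    rw [Finset.insert_eq_of_mem hc] at hs
    have := Finset.card_le_card hs
    omega
  have hc' : c ∈ MM k w (w * prodL L) := by
    by_contra hc'
    rw [Finset.subset_insert_iff_of_notMem hc'] at hs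
    have := Finset.card_le_card hs
    omega
  rw [MM, Finset.mem_filter] at hc hc'
  refine ⟨?_, hc'.2.1⟩
  by_contra h3
  apply hc
  refine ⟨Finset.mem_univ _, hc'.2.1, ?_⟩
  simp only [Equiv.Perm.mul_apply, Equiv.swap_apply_right]
  intro h4
  exact h3 (w.injective h4)

theorem FJ_perm_of_ne {N : ℕ} [NeZero N] {k : ℕ} (w : Equiv.Perm (Fin N)) (J : List (Fin N))
    (hJ : ∀ j ∈ J, (j : ℕ) < k) (L : List (Fin N × Fin N)) (hL : OKL k L)
    (hlen : L.length = J.length) (h : FJ (w * prodL L) J w ≠ 0) :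
    J.Perm (L.map Prod.fst) := by
  induction J generalizing L with
  | nil =>
    rw [List.length_nil, List.length_eq_zero_iff] at hlen
    rw [hlen]; exact List.Perm.refl _
  | cons j J ih =>
    obtain ⟨c, h1, h2⟩ := FJ_cons_ne _ j J w h
    have hJ' : ∀ j ∈ J, (j : ℕ) < k := fun j hj => hJ j (List.mem_cons_of_mem _ hj)
    have hj := hJ j List.mem_cons_self
    obtain ⟨h3, h4⟩ := FJ_survive hL w hJ' hlen hj h2
    obtain ⟨L1, L2, e1, e2⟩ := prodL_split hL hj h4 h3
    rw [mul_assoc, e2] at h2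
    have h5 := ih hJ' (L1 ++ L2) (OKL_perm hL (by rw [e1]; simp)) (by
      rw [e1] at hlen; simp at hlen ⊢; omega) h2
    rw [e1]
    simp only [List.map_append, List.map_cons] at h5 ⊢
    exact (List.Perm.cons j h5).trans List.perm_middle.symm

theorem FJ_one {N : ℕ} [NeZero N] {k : ℕ} (w : Equiv.Perm (Fin N))
    (L : List (Fin N × Fin N)) (hL : OKL k L)
    (hlen : ∀ i, i ≤ L.length → len (w * prodL (L.take i)) = len w + i) :
    FJ (w * prodL L) (L.map Prod.fst).reverse w = 1 := by
  induction L using List.reverseRecOn with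
  | nil => simp [prodL, FJ_nil]
  | append_singleton L x ih =>
    obtain ⟨o1, o2, o3⟩ := OKL_append hL
    obtain ⟨hx1, hx2⟩ := o2.1 x List.mem_cons_self
    have hrec := ih o1 (by
      intro i hi
      have := hlen i (by simp; omega)
      rwa [List.take_append_of_le_length hi] at this)
    rw [List.map_append, List.map_singleton, List.reverse_append, List.reverse_singleton,
      List.singleton_append, FJ_cons]
    have hJ : ∀ j ∈ (L.map Prod.fst).reverse, (j : ℕ) < k := by
      intro j hj
      rw [List.mem_reverse, List.mem_map] at hj
      obtain ⟨y, hy, rfl⟩ := hj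
      exact (o1.1 y hy).1
    have hxb : prodL (L ++ [x]) x.1 = x.2 := by
      rw [prodL_append, prodL_single, Equiv.Perm.mul_apply, Equiv.swap_apply_left,
        prodL_fix o1.1 hx2]
      rw [List.mem_map]
      rintro ⟨y, hy, hyx⟩
      exact o3 y hy x List.mem_cons_self hyx
    have hu : w * prodL (L ++ [x]) * Equiv.swap x.1 x.2 = w * prodL L := by
      rw [prodL_append, prodL_single, mul_assoc, mul_assoc, Equiv.swap_mul_self, mul_one]
    rw [Finset.sum_eq_single x.2]
    · rw [hu, hrec, if_pos]
      · rw [eps, if_pos, mul_one]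
        rw [Fin.lt_def]; omega
      · have l1 := hlen L.length (by simp)
        have l2 := hlen (L.length + 1) (by simp)
        rw [List.take_left'  rfl] at l1
        rw [List.take_of_length_le (by simp)] at l2
        omega
    · intro c _ hc
      split_ifs with h
      · by_contra h1
        apply hc
        have h2 : FJ (w * prodL (L ++ [x]) * Equiv.swap x.1 c) (L.map Prod.fst).reverse w ≠ 0 := by
          intro h3; rw [h3, mul_zero] at h1; exact h1 rfl
        have := (FJ_survive hL w hJ (by simp) hx1 h2).1
        rw [← this, hxb]
      · rfl
    · intro h; exact absurd (Finset.mem_univ _) h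

theorem prod_toList {N : ℕ} (d : Fin N →₀ ℕ) :
    ((Finsupp.toMultiset d).toList.map X).prod = (monomial d 1 : MvPolynomial (Fin N) ℤ) := by
  rw [← Multiset.prod_coe, ← Multiset.map_coe, Multiset.coe_toList,
    Finsupp.toMultiset_map, Finsupp.prod_toMultiset, Finsupp.prod_mapDomain_index
      (fun _ => pow_zero _) (fun _ _ _ => pow_add _ _ _), monomial_eq, C_1, one_mul]

theorem Dc_coeff {N : ℕ} [NeZero N] {k : ℕ} (w : Equiv.Perm (Fin N))
    (L : List (Fin N × Fin N)) (hL : OKL k L)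
    (hlen : ∀ i, i ≤ L.length → len (w * prodL (L.take i)) = len w + i)
    (f : MvPolynomial (Fin N) ℤ) (hf : ∀ d ∈ f.support, ∀ l ∈ d.support, (l : ℕ) < k) :
    Dc (w * prodL L) (f * schubertPoly N w) =
      coeff (Multiset.toFinsupp (L.map Prod.fst : Multiset (Fin N))) f := by
  have hfull := hlen L.length le_rfl
  rw [List.take_length] at hfull
  have key : ∀ d ∈ f.support, Dc (w * prodL L) (monomial d 1 * schubertPoly N w) =
      if d = Multiset.toFinsupp (L.map Prod.fst : Multiset (Fin N)) then 1 else 0 := by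
    intro d hd
    rw [← prod_toList]
    change FJ _ _ _ = _
    split_ifs with h
    · rw [← FJ_one w L hL hlen]
      unfold FJ
      rw [h]
      simp only [Multiset.toFinsupp_toMultiset]
      congr 2
      apply List.Perm.prod_eq
      apply List.Perm.map
      rw [← Multiset.coe_eq_coe, Multiset.coe_toList, Multiset.coe_reverse]
    · by_contra h1
      apply h
      have h2 := FJ_len _ _ _ h1
      have h3 := FJ_perm_of_ne (k := k) w _ (by
        intro j hj
        rw [Multiset.mem_toList, Finsupp.mem_toMultiset] at hj
        exact hf d hd j hj) L hL (by omega) h1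
      rw [← Multiset.coe_eq_coe, Multiset.coe_toList] at h3
      rw [← h3, Finsupp.toMultiset_toFinsupp]
  conv_lhs => rw [f.as_sum, Finset.sum_mul, map_sum]
  have : ∀ d ∈ f.support, Dc (w * prodL L) (monomial d (coeff d f) * schubertPoly N w) =
      if d = Multiset.toFinsupp (L.map Prod.fst : Multiset (Fin N)) then coeff d f else 0 := by
    intro d hd
    have e : monomial d (coeff d f) * schubertPoly N w =
        coeff d f • (monomial d 1 * schubertPoly N w) := by
      rw [← smul_mul_assoc, smul_monomial, smul_eq_mul, mul_one]
    rw [e, map_zsmul, key d hd, smul_eq_mul]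
    split_ifs <;> simp
  rw [Finset.sum_congr rfl this, Finset.sum_ite_eq' f.support]
  split_ifs with h
  · rfl
  · rw [notMem_support_iff.mp h]


/-! ### Complete homogeneous polynomials in a finite set of variables -/

/-- Complete homogeneous polynomial in a finite set of variables. -/
noncomputable def HS {N : ℕ} (s : Finset (Fin N)) (d : ℤ) : MvPolynomial (Fin N) ℤ :=
  if 0 ≤ d then ∑ u ∈ s.sym d.toNat, (Multiset.map X (u : Multiset (Fin N))).prod else 0

theorem hPolyZ_eq (N k : ℕ) (d : ℤ) :
    hPolyZ N k d = HS (Finset.univ.filter fun i : Fin N => (i : ℕ) < k) d := by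
  unfold hPolyZ HS hPoly
  congr

theorem HS_neg {N : ℕ} (s : Finset (Fin N)) {d : ℤ} (hd : d < 0) : HS s d = 0 := by
  rw [HS, if_neg (not_le.mpr hd)]

theorem HS_nat {N : ℕ} (s : Finset (Fin N)) (m : ℕ) :
    HS s m = ∑ u ∈ s.sym m, (Multiset.map X (u : Multiset (Fin N))).prod := by
  rw [HS, if_pos (by positivity)]; simp

theorem HS_zero {N : ℕ} (s : Finset (Fin N)) : HS s 0 = 1 := by
  have := HS_nat s 0
  rw [Nat.cast_zero] at this
  rw [this, Finset.sym_zero, Finset.sum_singleton]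
  rfl

theorem sym_insert_succ {N : ℕ} (s : Finset (Fin N)) (a : Fin N) (m : ℕ) :
    (insert a s).sym (m + 1) = s.sym (m + 1) ∪ ((insert a s).sym m).image (Sym.cons a) := by
  ext u
  rw [Finset.mem_union, Finset.mem_image, Finset.mem_sym_iff, Finset.mem_sym_iff]
  constructor
  · intro h
    by_cases hau : a ∈ u
    · right
      obtain ⟨t, rfl⟩ := Sym.exists_cons_of_mem hau
      refine ⟨t, ?_, rfl⟩
      rw [Finset.mem_sym_iff]
      intro x hx
      exact h x (Sym.mem_cons_of_mem hx)
    · left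
      intro x hx
      rcases Finset.mem_insert.mp (h x hx) with h1 | h1
      · rw [h1] at hx; exact absurd hx hau
      · exact h1
  · rintro (h | ⟨t, ht, rfl⟩) x hx
    · exact Finset.mem_insert_of_mem (h x hx)
    · rw [Finset.mem_sym_iff] at ht
      rcases Sym.mem_cons.mp hx with h1 | h1
      · rw [h1]; exact Finset.mem_insert_self _ _
      · exact ht x h1

theorem HS_insert {N : ℕ} (s : Finset (Fin N)) {a : Fin N} (ha : a ∉ s) (d : ℤ) :
    HS (insert a s) d = HS s d + X a * HS (insert a s) (d - 1) := by
  rcases lt_trichotomy d 0 with h | h | h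
  · rw [HS_neg _ h, HS_neg _ h, HS_neg _ (by omega)]; simp
  · subst h
    rw [HS_zero, HS_zero, HS_neg _ (by omega)]; simp
  · obtain ⟨m, rfl⟩ : ∃ m : ℕ, d = ((m + 1 : ℕ) : ℤ) := ⟨d.toNat - 1, by omega⟩
    have e : ((m + 1 : ℕ) : ℤ) - 1 = (m : ℕ) := by push_cast; ring
    rw [e, HS_nat, HS_nat, HS_nat, sym_insert_succ, Finset.sum_union, Finset.sum_image,
      Finset.mul_sum]
    · congr 1
      refine Finset.sum_congr rfl (fun u _ => ?_)
      rw [Sym.coe_cons, Multiset.map_cons, Multiset.prod_cons]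
    · intro x _ y _ h
      exact (Sym.cons_inj_right a x y).mp h
    · rw [Finset.disjoint_left]
      intro u hu hu'
      rw [Finset.mem_image] at hu'
      obtain ⟨t, _, rfl⟩ := hu'
      rw [Finset.mem_sym_iff] at hu
      exact ha (hu a (Sym.mem_cons_self a t))

theorem HS_empty {N : ℕ} {d : ℤ} (h : 0 < d) : HS (∅ : Finset (Fin N)) d = 0 := by
  obtain ⟨m, rfl⟩ : ∃ m : ℕ, d = ((m + 1 : ℕ) : ℤ) := ⟨d.toNat - 1, by omega⟩
  rw [HS_nat, Finset.sym_empty, Finset.sum_empty]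

theorem HS_single {N : ℕ} (l : Fin N) (m : ℕ) : HS {l} (m : ℤ) = X l ^ m := by
  induction m with
  | zero => rw [Nat.cast_zero, HS_zero, pow_zero]
  | succ m ih =>
    have := HS_insert ∅ (Finset.notMem_empty l) ((m + 1 : ℕ) : ℤ)
    rw [HS_empty (by positivity)] at this
    simp only [insert_empty_eq] at this
    rw [this]
    have e : ((m + 1 : ℕ) : ℤ) - 1 = (m : ℕ) := by push_cast; ring
    rw [e, ih, zero_add, pow_succ']

/-- The pairing `T^j ↦ h_{e+j}`. -/
noncomputable def Psi {N : ℕ} (s : Finset (Fin N)) (e : ℤ) :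
    Polynomial (MvPolynomial (Fin N) ℤ) →ₗ[MvPolynomial (Fin N) ℤ] MvPolynomial (Fin N) ℤ :=
  Polynomial.lsum fun j => LinearMap.toSpanSingleton _ _ (HS s (e + j))

theorem Psi_apply {N : ℕ} (s : Finset (Fin N)) (e : ℤ)
    (p : Polynomial (MvPolynomial (Fin N) ℤ)) :
    Psi s e p = p.sum fun j a => a * HS s (e + j) := by
  simp [Psi, Polynomial.lsum_apply]

theorem Psi_monomial {N : ℕ} (s : Finset (Fin N)) (e : ℤ) (j : ℕ) (a : MvPolynomial (Fin N) ℤ) :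
    Psi s e (Polynomial.monomial j a) = a * HS s (e + j) := by
  rw [Psi_apply, Polynomial.sum_monomial_index]
  rw [zero_mul]

theorem Psi_insert {N : ℕ} (s : Finset (Fin N)) {a : Fin N} (ha : a ∉ s) (e : ℤ)
    (p : Polynomial (MvPolynomial (Fin N) ℤ)) :
    Psi (insert a s) e (p * (Polynomial.X - Polynomial.C (X a))) = Psi s (e + 1) p := by
  induction p using Polynomial.induction_on' with
  | add p q hp hq => rw [add_mul, map_add, map_add, hp, hq]
  | monomial j b =>
    rw [mul_sub, Polynomial.monomial_mul_X, Polynomial.monomial_mul_C, map_sub, Psi_monomial,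
      Psi_monomial, Psi_monomial]
    have := HS_insert s ha (e + 1 + j)
    rw [show e + 1 + (j : ℤ) - 1 = e + j by ring] at this
    rw [show e + ((j + 1 : ℕ) : ℤ) = e + 1 + j by push_cast; ring, this]
    ring

theorem Psi_prod {N : ℕ} (s t : Finset (Fin N)) (h : Disjoint s t) (e : ℤ)
    (p : Polynomial (MvPolynomial (Fin N) ℤ)) :
    Psi (t ∪ s) e (p * ∏ i ∈ t, (Polynomial.X - Polynomial.C (X i))) =
      Psi s (e + t.card) p := by
  induction t using Finset.induction_on generalizing e p with
  | empty => simp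
  | insert a t hat ih =>
    rw [Finset.disjoint_insert_right] at h
    rw [Finset.prod_insert hat, Finset.insert_union, mul_comm (Polynomial.X - _), ← mul_assoc,
      Psi_insert, ih h.2, Finset.card_insert_of_notMem hat]
    · congr 1; push_cast; ring_nf
    · rw [Finset.mem_union, not_or]; exact ⟨hat, h.1⟩

/-- The first `k` variables. -/
def SK (N k : ℕ) : Finset (Fin N) := Finset.univ.filter fun i : Fin N => (i : ℕ) < k

theorem card_SK {N k : ℕ} (hk : k ≤ N) : (SK N k).card = k := by
  have : SK N k = Finset.univ.map (Fin.castLEEmb hk) := by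
    ext i
    simp only [SK, Finset.mem_filter, Finset.mem_univ, true_and, Finset.mem_map]
    constructor
    · intro h; exact ⟨⟨i, h⟩, rfl⟩
    · rintro ⟨x, rfl⟩; exact x.2
  rw [this, Finset.card_map, Finset.card_univ, Fintype.card_fin]

/-- `∏_{i ≠ l} (T - x_i)`. -/
noncomputable def qP (N k : ℕ) (l : Fin N) : Polynomial (MvPolynomial (Fin N) ℤ) :=
  ∏ i ∈ (SK N k).erase l, (Polynomial.X - Polynomial.C (X i))

theorem qP_natDegree {N k : ℕ} (hk : k ≤ N) {l : Fin N} (hl : (l : ℕ) < k) :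
    (qP N k l).natDegree < k := by
  rw [qP, Polynomial.natDegree_finsetProd_X_sub_C_eq_card, Finset.card_erase_of_mem, card_SK hk]
  · omega
  · simp [SK, hl]

theorem Psi_qP {N k : ℕ} (hk : k ≤ N) {l : Fin N} (hl : (l : ℕ) < k) (e : ℤ) (d : ℕ)
    (hd : e + (k - 1) = d) : Psi (SK N k) e (qP N k l) = X l ^ d := by
  have hmem : l ∈ SK N k := by simp [SK, hl]
  have := Psi_prod {l} ((SK N k).erase l) (by simp) e 1
  have e1 : (SK N k).erase l ∪ {l} = SK N k := by
    rw [Finset.union_comm, ← Finset.insert_eq, Finset.insert_erase hmem]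
  rw [e1, one_mul, Finset.card_erase_of_mem hmem, card_SK hk] at this
  rw [qP, this, ← Polynomial.monomial_zero_one, Psi_monomial, one_mul, ← HS_single]
  congr 1
  push_cast [Nat.cast_sub (show 1 ≤ k by omega)]
  rw [← hd]; ring

theorem Psi_sum {N k : ℕ} (e : ℤ) (s : Finset (Fin N)) (p : Polynomial (MvPolynomial (Fin N) ℤ))
    (hp : p.natDegree < k) :
    Psi s e p = ∑ j : Fin k, HS s (e + (j : ℕ)) * p.coeff j := by
  rw [Psi_apply, Polynomial.sum_over_range' p (f := fun j a => a * HS s (e + (j : ℕ)))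
    (fun n => zero_mul _) k hp, Finset.sum_range]
  exact Finset.sum_congr rfl (fun j _ => mul_comm _ _)

/-- The alternant `det(x_l^{β_i})`. -/
noncomputable def AA {N k : ℕ} (hk : k ≤ N) (β : Fin k → ℕ) : MvPolynomial (Fin N) ℤ :=
  (Matrix.of fun i l : Fin k => (X (Fin.castLE hk l) : MvPolynomial (Fin N) ℤ) ^ β i).det

/-- `λ + δ`. -/
def addDelta (k : ℕ) (lam : ℕ → ℕ) (i : Fin k) : ℕ := lam ((i : ℕ) + 1) + (k - 1 - i)

theorem schur_mul_det {N k : ℕ} (hk : k ≤ N) (lam : ℕ → ℕ) :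
    schurPoly N k lam * (Matrix.of fun j l : Fin k => (qP N k (Fin.castLE hk l)).coeff j).det =
      AA hk (addDelta k lam) := by
  rw [schurPoly, ← Matrix.det_mul, AA]
  congr 1
  ext1 i l
  rw [Matrix.mul_apply]
  simp only [Matrix.of_apply]
  have hl : ((Fin.castLE hk l : Fin N) : ℕ) < k := l.2
  rw [← Psi_qP hk hl ((lam ((i : ℕ) + 1) : ℤ) - (i : ℕ)) (addDelta k lam i),
    Psi_sum _ _ _ (qP_natDegree hk hl)]
  · refine Finset.sum_congr rfl (fun j _ => ?_)
    rw [hPolyZ_eq]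
    congr 2
    ring
  · have := i.2
    unfold addDelta
    push_cast [Nat.cast_sub (show (i : ℕ) ≤ k - 1 by omega), Nat.cast_sub (show 1 ≤ k by omega)]
    ring

theorem schur_zero (N k : ℕ) : schurPoly N k (fun _ => 0) = 1 := by
  rw [schurPoly, Matrix.det_of_isUpperTriangular]
  · apply Finset.prod_eq_one
    intro i _
    simp only [Matrix.of_apply, hPolyZ_eq]
    rw [show ((0 : ℕ) : ℤ) + (i : ℕ) - (i : ℕ) = 0 by simp, HS_zero]
  · intro i j hij
    simp only [Matrix.of_apply, hPolyZ_eq]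
    apply HS_neg
    simp only [id] at hij
    rw [Fin.lt_def] at hij
    push_cast
    omega

theorem bialternant {N k : ℕ} (hk : k ≤ N) (lam : ℕ → ℕ) :
    schurPoly N k lam * AA hk (addDelta k fun _ => 0) = AA hk (addDelta k lam) := by
  have h := schur_mul_det hk (fun _ => 0)
  rw [schur_zero, one_mul] at h
  rw [← h, schur_mul_det]

theorem HS_supported {N : ℕ} (s : Finset (Fin N)) (d : ℤ) : HS s d ∈ supported ℤ (s : Set (Fin N)) := by
  unfold HS
  split_ifs
  · apply sum_mem
    intro u hu
    apply multiset_prod_mem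
    intro y hy
    rw [Multiset.mem_map] at hy
    obtain ⟨x, hx, rfl⟩ := hy
    rw [X_mem_supported]
    exact Finset.mem_sym_iff.mp hu x hx
  · exact zero_mem _

theorem schur_supported {N k : ℕ} (lam : ℕ → ℕ) :
    ∀ d ∈ (schurPoly N k lam).support, ∀ l ∈ d.support, (l : ℕ) < k := by
  have h : schurPoly N k lam ∈ supported ℤ ((SK N k : Finset (Fin N)) : Set (Fin N)) := by
    rw [schurPoly, Matrix.det_apply]
    apply sum_mem
    intro σ _
    rw [Units.smul_def]
    apply zsmul_mem
    apply prod_mem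
    intro i _
    rw [Matrix.of_apply, hPolyZ_eq]
    exact HS_supported _ _
  intro d hd l hl
  rw [mem_supported] at h
  have h1 : l ∈ (schurPoly N k lam).vars := (mem_vars_iff_mem_support l).mpr ⟨d, hd, hl⟩
  have h2 := h h1
  rw [Finset.mem_coe, SK, Finset.mem_filter] at h2
  exact h2.2

/-! ### Coefficients of alternants -/

/-- Exponent vectors in the first `k` variables. -/
noncomputable def EE {N k : ℕ} (hk : k ≤ N) (β : Fin k → ℕ) : Fin N →₀ ℕ :=
  ∑ i, Finsupp.single (Fin.castLE hk i) (β i)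

theorem EE_apply {N k : ℕ} (hk : k ≤ N) (β : Fin k → ℕ) (i : Fin k) :
    EE hk β (Fin.castLE hk i) = β i := by
  rw [EE, Finsupp.finsetSum_apply, Finset.sum_eq_single i]
  · simp
  · intro j _ hj
    rw [Finsupp.single_apply, if_neg]
    intro h
    exact hj (Fin.castLE_injective hk h)
  · simp

theorem EE_apply_ge {N k : ℕ} (hk : k ≤ N) (β : Fin k → ℕ) (l : Fin N) (hl : k ≤ (l : ℕ)) :
    EE hk β l = 0 := by
  rw [EE, Finsupp.finsetSum_apply]
  apply Finset.sum_eq_zero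
  intro j _
  rw [Finsupp.single_apply, if_neg]
  rintro rfl
  have := j.2
  simp at hl
  omega

theorem EE_eq_iff {N k : ℕ} (hk : k ≤ N) (β : Fin k → ℕ) (d : Fin N →₀ ℕ) :
    EE hk β = d ↔ (∀ i, β i = d (Fin.castLE hk i)) ∧ ∀ l : Fin N, k ≤ (l : ℕ) → d l = 0 := by
  constructor
  · rintro rfl
    exact ⟨fun i => (EE_apply hk β i).symm, fun l hl => EE_apply_ge hk β l hl⟩
  · rintro ⟨h1, h2⟩
    ext l
    by_cases hl : (l : ℕ) < k
    · have := EE_apply hk β ⟨l, hl⟩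
      rw [h1] at this
      exact this
    · rw [EE_apply_ge hk β l (by omega), h2 l (by omega)]

theorem EE_inj {N k : ℕ} (hk : k ≤ N) {β γ : Fin k → ℕ} (h : EE hk β = EE hk γ) : β = γ := by
  ext i
  rw [← EE_apply hk β i, h, EE_apply]

theorem monomial_EE {N k : ℕ} (hk : k ≤ N) (β : Fin k → ℕ) :
    (monomial (EE hk β) 1 : MvPolynomial (Fin N) ℤ) = ∏ i, X (Fin.castLE hk i) ^ β i := by
  simp only [EE, monomial_sum_one, X_pow_eq_monomial]


theorem AA_expand {N k : ℕ} (hk : k ≤ N) (β : Fin k → ℕ) :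
    AA hk β = ∑ σ : Equiv.Perm (Fin k), (Equiv.Perm.sign σ : ℤ) •
      (monomial (EE hk (β ∘ σ)) 1 : MvPolynomial (Fin N) ℤ) := by
  rw [AA, Matrix.det_apply]
  refine Finset.sum_congr rfl (fun σ _ => ?_)
  rw [monomial_EE, Units.smul_def]
  rfl

theorem perm_eq_one_of_le {k : ℕ} (σ : Equiv.Perm (Fin k)) (h : ∀ i, i ≤ σ i) : σ = 1 := by
  have h1 : ∑ i, ((i : Fin k) : ℕ) = ∑ i, ((σ i : Fin k) : ℕ) :=
    (Equiv.sum_comp σ (fun i : Fin k => (i : ℕ))).symm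
  rw [Finset.sum_eq_sum_iff_of_le (fun i _ => Fin.le_def.mp (h i))] at h1
  ext i
  exact (h1 i (Finset.mem_univ _)).symm

theorem strictAnti_perm {k : ℕ} {β γ : Fin k → ℕ} (hβ : StrictAnti β) (hγ : StrictAnti γ)
    (σ : Equiv.Perm (Fin k)) (h : β ∘ σ = γ) : σ = 1 := by
  have hmono : StrictMono σ := by
    intro x y hxy
    have := hγ hxy
    rw [← h] at this
    exact hβ.lt_iff_gt.mp this
  exact perm_eq_one_of_le σ (fun i => hmono.le_apply)

theorem coeff_AA {N k : ℕ} (hk : k ≤ N) {β γ : Fin k → ℕ} (hβ : StrictAnti β) (hγ : StrictAnti γ) :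
    coeff (EE hk γ) (AA hk β) = if β = γ then 1 else 0 := by
  rw [AA_expand, coeff_sum, Finset.sum_eq_single 1]
  · have e : β ∘ ⇑(1 : Equiv.Perm (Fin k)) = β := rfl
    rw [coeff_smul, coeff_monomial, e, Equiv.Perm.sign_one, Units.val_one, one_smul]
    by_cases h : β = γ
    · simp [h]
    · rw [if_neg, if_neg h]
      intro h'
      exact h (EE_inj hk h')
  · intro σ _ hσ
    rw [coeff_smul, coeff_monomial, if_neg, smul_zero]
    intro h
    exact hσ (strictAnti_perm hβ hγ σ (EE_inj hk h))
  · simp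

theorem addDelta_strictAnti {k : ℕ} {lam : ℕ → ℕ} (h : ∀ j, 1 ≤ j → lam (j + 1) ≤ lam j) :
    StrictAnti (addDelta k lam) := by
  have hanti : ∀ x y : ℕ, x ≤ y → lam (y + 1) ≤ lam (x + 1) := by
    intro x y hxy
    induction y, hxy using Nat.le_induction with
    | base => exact le_rfl
    | succ y hy ih => exact (h (y + 1) (by omega)).trans ih
  intro x y hxy
  have := hanti x y hxy.le
  unfold addDelta
  rw [Fin.lt_def] at hxy
  have := y.2
  omega

theorem AA_delta_ne {N k : ℕ} (hk : k ≤ N) : AA hk (addDelta k fun _ => 0) ≠ 0 := by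
  intro h
  have h1 := coeff_AA hk (addDelta_strictAnti (k := k) (lam := fun _ => 0) (by simp))
    (addDelta_strictAnti (k := k) (lam := fun _ => 0) (by simp))
  rw [h, if_pos rfl, coeff_zero] at h1
  exact zero_ne_one h1

/-! ### The Littlewood-Richardson side -/

theorem coeff_AA_mul {N k : ℕ} (hk : k ≤ N) {β γ : Fin k → ℕ} (hγ : StrictAnti γ)
    (hβγ : ∀ i j : Fin k, (j : ℕ) = i + 1 → β i = γ j + 1) (hle : β ≤ γ)
    (f : MvPolynomial (Fin N) ℤ) :
    coeff (EE hk γ) (AA hk β * f) = coeff (EE hk (γ - β)) f := by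
  have hsub : EE hk γ - EE hk β = EE hk (γ - β) := by
    symm
    rw [EE_eq_iff]
    refine ⟨fun i => ?_, fun l hl => ?_⟩
    · rw [Finsupp.tsub_apply, EE_apply, EE_apply]; rfl
    · rw [Finsupp.tsub_apply, EE_apply_ge hk _ l hl]; simp
  rw [AA_expand, Finset.sum_mul, coeff_sum, Finset.sum_eq_single 1]
  · simp only [Equiv.Perm.sign_one, Units.val_one, one_smul, Equiv.Perm.coe_one,
      Function.comp_id]
    rw [coeff_monomial_mul', if_pos, one_mul, hsub]
    intro l
    by_cases hl : (l : ℕ) < k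
    · have h1 := EE_apply hk β ⟨l, hl⟩
      have h2 := EE_apply hk γ ⟨l, hl⟩
      have h3 := hle ⟨l, hl⟩
      rw [← h1, ← h2] at h3
      exact h3
    · rw [EE_apply_ge hk β l (by omega)]; exact Nat.zero_le _
  · intro σ _ hσ
    rw [smul_mul_assoc, coeff_smul, coeff_monomial_mul', if_neg, smul_zero]
    intro h
    apply hσ
    apply perm_eq_one_of_le
    intro i
    have h1 := h (Fin.castLE hk i)
    rw [EE_apply, EE_apply, Function.comp_apply] at h1
    by_cases hs : (σ i : ℕ) + 1 < k
    · have h2 := hβγ (σ i) ⟨(σ i : ℕ) + 1, hs⟩ rfl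
      by_contra hcon
      rw [not_le, Fin.lt_def] at hcon
      have h3 : γ i ≤ γ ⟨(σ i : ℕ) + 1, hs⟩ := hγ.antitone (by
        rw [Fin.le_def]; exact hcon)
      omega
    · rw [Fin.le_def]
      have := i.2
      omega
  · simp

theorem addDelta_inj {k : ℕ} {lam rho : ℕ → ℕ} (h1 : IsPartFun k lam) (h2 : IsPartFun k rho)
    (h : addDelta k lam = addDelta k rho) : lam = rho := by
  ext j
  by_cases hj0 : j = 0
  · rw [hj0, h1.1, h2.1]
  · by_cases hj : k < j
    · rw [h1.2.2 j hj, h2.2.2 j hj]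
    · have := congrFun h ⟨j - 1, by omega⟩
      unfold addDelta at this
      simp only at this
      rw [show j - 1 + 1 = j by omega] at this
      omega

theorem lamJ_succ (a : ℕ → ℕ) (m k j : ℕ) (hj : 1 ≤ j) :
    lamJ a m k j = muJ a m k j + rJ a m j := by
  rw [lamJ, if_neg (by omega)]

theorem muJ_eq (a : ℕ → ℕ) (m k j : ℕ) (hj : 1 ≤ j) (hjk : j < k) :
    muJ a m k j = lamJ a m k (j + 1) := by
  rw [lamJ_succ _ _ _ _ (by omega), muJ, muJ, if_neg (by omega), if_neg (by omega)]
  rw [← Finset.insert_Icc_add_one_left_eq_Icc (show j + 1 ≤ k by omega), Finset.sum_insert]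
  · ring
  · simp

theorem lamJ_part (a : ℕ → ℕ) (m k : ℕ) (ha : ∀ i, i < m → 1 ≤ a i ∧ a i ≤ k) :
    IsPartFun k (lamJ a m k) := by
  have h0 : ∀ j, k < j → lamJ a m k j = 0 := by
    intro j hj
    rw [lamJ_succ _ _ _ _ (by omega), muJ, if_neg (by omega), Finset.Icc_eq_empty (by omega),
      Finset.sum_empty, zero_add, rJ, Finset.card_eq_zero, Finset.filter_eq_empty_iff]
    intro i hi h
    have := ha i (Finset.mem_range.mp hi)
    omega
  refine ⟨by simp [lamJ], ?_, h0⟩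
  intro j hj
  by_cases hjk : j < k
  · rw [← muJ_eq a m k j hj hjk, lamJ_succ _ _ _ _ hj]; omega
  · rw [h0 (j + 1) (by omega)]; omega

theorem LR_side {N k : ℕ} (hk : k ≤ N) (m : ℕ) (a : ℕ → ℕ) (ha : ∀ i, i < m → 1 ≤ a i ∧ a i ≤ k)
    (nu : ℕ → ℕ) (cLR : (ℕ → ℕ) → ℤ) (hfin : (Function.support cLR).Finite)
    (hsupp : ∀ lam, cLR lam ≠ 0 → IsPartFun k lam)
    (hLR : schurPoly N k (muJ a m k) * schurPoly N k nu =
      ∑ᶠ lam, cLR lam • schurPoly N k lam) :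
    cLR (lamJ a m k) = coeff (EE hk (fun i : Fin k => rJ a m (i + 1))) (schurPoly N k nu) := by
  have hlam := lamJ_part a m k ha
  have hγ : StrictAnti (addDelta k (lamJ a m k)) := addDelta_strictAnti hlam.2.1
  have h1 : AA hk (addDelta k (muJ a m k)) * schurPoly N k nu =
      ∑ lam ∈ hfin.toFinset, cLR lam • AA hk (addDelta k lam) := by
    rw [finsum_eq_sum_of_support_subset (s := hfin.toFinset)] at hLR
    · rw [← bialternant hk, mul_right_comm, hLR, Finset.sum_mul]
      refine Finset.sum_congr rfl (fun lam _ => ?_)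
      rw [smul_mul_assoc, bialternant]
    · intro lam hl
      rw [Set.Finite.coe_toFinset]
      intro h
      apply hl
      change cLR lam • _ = _
      rw [h, zero_smul]
  have h2 := congrArg (coeff (EE hk (addDelta k (lamJ a m k)))) h1
  rw [coeff_AA_mul hk hγ, coeff_sum] at h2
  · have e : addDelta k (lamJ a m k) - addDelta k (muJ a m k) =
        fun i : Fin k => rJ a m (i + 1) := by
      ext i
      rw [Pi.sub_apply, addDelta, addDelta, lamJ_succ _ _ _ _ (by omega)]
      omega
    rw [← e, h2]
    have h3 : ∀ lam ∈ hfin.toFinset, coeff (EE hk (addDelta k (lamJ a m k)))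
        (cLR lam • AA hk (addDelta k lam)) = if lam = lamJ a m k then cLR lam else 0 := by
      intro lam hl
      rw [Set.Finite.mem_toFinset] at hl
      have hp := hsupp lam hl
      rw [coeff_smul, coeff_AA hk (addDelta_strictAnti hp.2.1) hγ]
      by_cases h : lam = lamJ a m k
      · rw [if_pos h, if_pos (by rw [h])]; simp
      · rw [if_neg h, if_neg (fun h' => h (addDelta_inj hp hlam h'))]; simp
    rw [Finset.sum_congr rfl h3, Finset.sum_ite_eq']
    split_ifs with h
    · rfl
    · rw [Set.Finite.mem_toFinset, Function.notMem_support] at h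
      exact h
  · intro i j hij
    have := j.2
    rw [addDelta, addDelta, muJ_eq a m k _ (by omega) (by omega), hij]
    omega
  · intro i
    change muJ a m k ((i : ℕ) + 1) + _ ≤ lamJ a m k ((i : ℕ) + 1) + _
    rw [lamJ_succ _ _ _ _ (by omega)]
    omega


/-! ### Grassmannian Schubert polynomials are Schur polynomials -/

theorem rename_EE {N k : ℕ} (hk : k ≤ N) (p q : Fin k) (γ : Fin k → ℕ) :
    rename (Equiv.swap (Fin.castLE hk p) (Fin.castLE hk q))
      (monomial (EE hk γ) 1 : MvPolynomial (Fin N) ℤ) =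
      monomial (EE hk (γ ∘ Equiv.swap p q)) 1 := by
  rw [monomial_EE, monomial_EE, map_prod, ← Equiv.prod_comp (Equiv.swap p q)]
  refine Finset.prod_congr rfl (fun i _ => ?_)
  rw [map_pow, rename_X, ← (Fin.castLE_injective hk).map_swap, Equiv.swap_apply_self]
  rfl

theorem rename_AA {N k : ℕ} (hk : k ≤ N) {p q : Fin k} (hpq : p ≠ q) (β : Fin k → ℕ) :
    rename (Equiv.swap (Fin.castLE hk p) (Fin.castLE hk q)) (AA hk β) = - AA hk β := by
  rw [AA_expand, map_sum, ← Finset.sum_neg_distrib, ← Equiv.sum_comp (Equiv.mulRight (Equiv.swap p q))]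
  refine Finset.sum_congr rfl (fun σ _ => ?_)
  rw [map_zsmul, rename_EE, Equiv.coe_mulRight, Equiv.Perm.sign_mul, Equiv.Perm.sign_swap hpq]
  have : (β ∘ ⇑(σ * Equiv.swap p q)) ∘ ⇑(Equiv.swap p q) = β ∘ σ := by
    ext i; simp
  rw [this]
  simp

theorem schur_symm {N k : ℕ} (hk : k ≤ N) {p q : Fin k} (hpq : p ≠ q) (lam : ℕ → ℕ) :
    rename (Equiv.swap (Fin.castLE hk p) (Fin.castLE hk q)) (schurPoly N k lam) =
      schurPoly N k lam := by
  have h := congrArg (rename (Equiv.swap (Fin.castLE hk p) (Fin.castLE hk q))) (bialternant hk lam)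
  rw [map_mul, rename_AA hk hpq, rename_AA hk hpq, mul_neg, neg_inj, ← bialternant hk lam] at h
  exact mul_right_cancel₀ (AA_delta_ne hk) h

theorem fix_desc {N k : ℕ} {u : Equiv.Perm (Fin N)} (hu : ∀ x : Fin N, k ≤ (x : ℕ) → u x = x)
    {p q : Fin N} (hpq : (q : ℕ) = p + 1) (hlt : u q < u p) : (q : ℕ) < k := by
  by_contra hq
  have h1 := hu q (by omega)
  rw [h1, Fin.lt_def] at hlt
  have h2 := hu (u p) (by omega)
  have := u.injective h2
  rw [this] at hlt
  omega

theorem fix_swap {N k : ℕ} {u : Equiv.Perm (Fin N)} (hu : ∀ x : Fin N, k ≤ (x : ℕ) → u x = x)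
    {p q : Fin N} (hpq : (q : ℕ) = p + 1) (hq : (q : ℕ) < k) :
    ∀ x : Fin N, k ≤ (x : ℕ) → (u * Equiv.swap p q) x = x := by
  intro x hx
  rw [Equiv.Perm.mul_apply, Equiv.swap_apply_of_ne_of_ne, hu x hx]
  · rintro rfl; omega
  · rintro rfl; omega

theorem dw_schubert_mul {N k : ℕ} [NeZero N] (g u : Equiv.Perm (Fin N))
    (hu : ∀ x : Fin N, k ≤ (x : ℕ) → u x = x)
    (hg : ∀ x y : Fin N, x < y → (y : ℕ) < k → g x < g y) :
    dw u (schubertPoly N (g * u)) = schubertPoly N g := by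
  induction u using dw_rec with
  | h1 => rw [dw_one, mul_one]
  | h2 u p q hpq hlt ih =>
    have hq := fix_desc hu hpq hlt
    rw [dw_desc u p q hpq hlt, schubert_desc (g * u) hpq, mul_assoc]
    · exact ih (fix_swap hu hpq hq)
    · apply hg _ _ hlt
      by_contra h
      have h2 := hu (u p) (by omega)
      have := u.injective h2
      rw [this] at h
      omega

theorem dw_symk_mul {N k : ℕ} [NeZero N] (u : Equiv.Perm (Fin N))
    (hu : ∀ x : Fin N, k ≤ (x : ℕ) → u x = x) (f : MvPolynomial (Fin N) ℤ)
    (hf : ∀ p q : Fin N, (q : ℕ) = p + 1 → (q : ℕ) < k → rename (Equiv.swap p q) f = f)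
    (g : MvPolynomial (Fin N) ℤ) : dw u (f * g) = f * dw u g := by
  induction u using dw_rec generalizing g with
  | h1 => rw [dw_one, dw_one]
  | h2 u p q hpq hlt ih =>
    have hq := fix_desc hu hpq hlt
    rw [dw_desc u p q hpq hlt, DD_symm_mul (adj_ne hpq) (hf p q hpq hq),
      ih (fix_swap hu hpq hq), ← dw_desc u p q hpq hlt]

/-- Reversal of the first `k` positions. -/
def revk {N k : ℕ} (hk : k ≤ N) : Equiv.Perm (Fin N) :=
  Function.Involutive.toPerm
    (fun x => if h : (x : ℕ) < k then ⟨k - 1 - x, by omega⟩ else x) (by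
      intro x
      by_cases h : (x : ℕ) < k
      · apply Fin.ext
        simp only [h, dif_pos]
        rw [dif_pos (by omega)]
        simp only
        omega
      · simp only [h, dif_neg, not_false_eq_true])

theorem revk_lt {N k : ℕ} (hk : k ≤ N) {x : Fin N} (h : (x : ℕ) < k) :
    ((revk hk x : Fin N) : ℕ) = k - 1 - x := by
  simp [revk, Function.Involutive.toPerm, h]

theorem revk_ge {N k : ℕ} (hk : k ≤ N) {x : Fin N} (h : k ≤ (x : ℕ)) :
    revk hk x = x := by
  simp [revk, Function.Involutive.toPerm, not_lt.mpr h]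

theorem dw_revk_perm {N k : ℕ} [NeZero N] [NeZero k] (hk : k ≤ N) (σ : Equiv.Perm (Fin k))
    (β : Fin k → ℕ) : dw (revk hk) (monomial (EE hk (β ∘ σ)) 1) =
      (Equiv.Perm.sign σ : ℤ) • dw (revk hk) (monomial (EE hk β) 1) := by
  induction σ using dw_rec with
  | h1 => simp
  | h2 σ p q hpq hlt ih =>
    have e : β ∘ σ = (β ∘ ⇑(σ * Equiv.swap p q)) ∘ ⇑(Equiv.swap p q) := by
      ext i; simp
    have hpq' : ((Fin.castLE hk q : Fin N) : ℕ) = (Fin.castLE hk p : Fin N) + 1 := hpq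
    have hd : revk hk (Fin.castLE hk q) < revk hk (Fin.castLE hk p) := by
      rw [Fin.lt_def, revk_lt hk (by simp), revk_lt hk (by simp), hpq']
      have := q.2
      have : (Fin.castLE hk p : ℕ) = p := rfl
      omega
    rw [e, ← rename_EE, dw_desc _ _ _ hpq' hd, DD_rename (adj_ne hpq'), ← dwHom_apply, map_neg,
      dwHom_apply, ← dw_desc _ _ _ hpq' hd, ih, Equiv.Perm.sign_mul,
      Equiv.Perm.sign_swap (adj_ne hpq)]
    simp

theorem dw_revk_AA {N k : ℕ} [NeZero N] [NeZero k] (hk : k ≤ N) (β : Fin k → ℕ) :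
    dw (revk hk) (AA hk β) = (k.factorial : ℤ) • dw (revk hk) (monomial (EE hk β) 1) := by
  rw [AA_expand, ← dwHom_apply, map_sum]
  have : ∀ σ ∈ (Finset.univ : Finset (Equiv.Perm (Fin k))), dwHom (revk hk)
      ((Equiv.Perm.sign σ : ℤ) • (monomial (EE hk (β ∘ σ)) 1 : MvPolynomial (Fin N) ℤ)) =
      dw (revk hk) (monomial (EE hk β) 1) := by
    intro σ _
    rw [map_zsmul, dwHom_apply, dw_revk_perm, smul_smul]
    simp
  rw [Finset.sum_congr rfl this, Finset.sum_const, Finset.card_univ, Fintype.card_perm,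
    Fintype.card_fin, natCast_zsmul]

theorem grass_small {N k : ℕ} [NeZero N] {nu : ℕ → ℕ} {wv : Equiv.Perm (Fin N)}
    (h : IsGrassOf N k nu wv) (x : Fin N) (hx : (x : ℕ) < k) : (wv x : ℕ) = x + nu (k - x) := by
  have := h.1 (x + 1) (by omega) (by omega)
  rw [val, pos_succ, show k + 1 - ((x : ℕ) + 1) = k - x by omega] at this
  omega

theorem grass_large {N k : ℕ} [NeZero N] {nu : ℕ → ℕ} {wv : Equiv.Perm (Fin N)}
    (h : IsGrassOf N k nu wv) (x y : Fin N) (hx : k ≤ (x : ℕ)) (hxy : x < y) : wv x < wv y := by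
  obtain ⟨y, hy⟩ := y
  rw [Fin.lt_def] at hxy
  simp only at hxy
  have key : ∀ z : Fin N, ∀ hz : (z : ℕ) + 1 < N, k ≤ (z : ℕ) → wv z < wv ⟨z + 1, hz⟩ := by
    intro z hz hkz
    have := h.2 (z + 1) (by omega) hz
    rw [val, val, pos_succ] at this
    have e : pos N ((z : ℕ) + 1 + 1) = ⟨z + 1, hz⟩ := pos_succ (⟨z + 1, hz⟩ : Fin N)
    rw [e] at this
    rw [Fin.lt_def]
    omega
  induction y, hxy using Nat.le_induction with
  | base => exact key x hy hx
  | succ y hxy ih => exact (ih (by omega)).trans (key ⟨y, by omega⟩ hy (by simp; omega))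

theorem part_anti {k : ℕ} {nu : ℕ → ℕ} (h : IsPartFun k nu) {x y : ℕ} (hx : 1 ≤ x) (hxy : x ≤ y) :
    nu y ≤ nu x := by
  induction y, hxy using Nat.le_induction with
  | base => exact le_rfl
  | succ y hy ih => exact (h.2.1 y (by omega)).trans ih

theorem grass_mono {N k : ℕ} [NeZero N] {nu : ℕ → ℕ} (hnu : IsPartFun k nu)
    {wv : Equiv.Perm (Fin N)} (h : IsGrassOf N k nu wv) (x y : Fin N) (hxy : x < y)
    (hy : (y : ℕ) < k) : wv x < wv y := by
  rw [Fin.lt_def] at *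
  rw [grass_small h x (by omega), grass_small h y hy]
  have := part_anti hnu (x := k - y) (y := k - x) (by omega) (by omega)
  omega

theorem grass_dom {N k : ℕ} [NeZero N] (hk : k ≤ N) {nu : ℕ → ℕ} (hnu : IsPartFun k nu)
    {wv : Equiv.Perm (Fin N)} (h : IsGrassOf N k nu wv) :
    schubertPoly N (wv * revk hk) = monomial (EE hk (addDelta k nu)) 1 := by
  have hanti : ∀ x y : Fin N, x < y → (y : ℕ) < k →
      (wv * revk hk) y < (wv * revk hk) x := by
    intro x y hxy hy
    rw [Fin.lt_def] at hxy
    apply grass_mono hnu h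
    · rw [Fin.lt_def, revk_lt hk hy, revk_lt hk (by omega)]; omega
    · rw [revk_lt hk (by omega)]; omega
  have hc1 : ∀ p : Fin N, (p : ℕ) < k → code (wv * revk hk) p = ((wv * revk hk) p : ℕ) := by
    intro p hp
    have e : (Finset.univ.filter fun x : Fin N => p < x ∧ (wv * revk hk) x < (wv * revk hk) p) =
        (Finset.Iio ((wv * revk hk) p)).map (wv * revk hk)⁻¹.toEmbedding := by
      ext x
      rw [Finset.mem_filter, Finset.mem_map_equiv, Finset.mem_Iio]
      change _ ↔ (wv * revk hk) x < _
      refine ⟨fun h => h.2.2, fun h => ⟨Finset.mem_univ _, ?_, h⟩⟩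
      by_contra hx
      rcases lt_or_eq_of_le (not_lt.mp hx) with h1 | h1
      · exact absurd h (not_lt.mpr (hanti x p h1 hp).le)
      · rw [h1] at h; exact lt_irrefl _ h
    rw [code, e, Finset.card_map, Fin.card_Iio]
  have hc2 : ∀ p : Fin N, k ≤ (p : ℕ) → code (wv * revk hk) p = 0 := by
    intro p hp
    rw [code, Finset.card_eq_zero, Finset.filter_eq_empty_iff]
    rintro x - ⟨h1, h2⟩
    have hx : k ≤ (x : ℕ) := hp.trans h1.le
    rw [Equiv.Perm.mul_apply, Equiv.Perm.mul_apply, revk_ge hk hp, revk_ge hk hx] at h2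
    exact absurd h2 (not_lt.mpr (grass_large h p x hp h1).le)
  rw [schubert_dominant]
  · rw [monomial_EE]
    have hsub : ∏ p : Fin N, (X p : MvPolynomial (Fin N) ℤ) ^ code (wv * revk hk) p =
        ∏ p ∈ Finset.univ.map (Fin.castLEEmb hk), X p ^ code (wv * revk hk) p := by
      symm
      apply Finset.prod_subset (Finset.subset_univ _)
      intro p _ hp
      rw [hc2, pow_zero]
      by_contra hcon
      apply hp
      rw [Finset.mem_map]
      exact ⟨⟨p, by omega⟩, Finset.mem_univ _, rfl⟩
    rw [hsub, Finset.prod_map]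
    refine Finset.prod_congr rfl (fun i _ => ?_)
    change X (Fin.castLE hk i) ^ _ = _
    congr 1
    have hi : ((Fin.castLE hk i : Fin N) : ℕ) < k := i.2
    have hr := revk_lt hk hi
    change code (wv * revk hk) (Fin.castLE hk i) = _
    rw [hc1 _ hi, Equiv.Perm.mul_apply, grass_small h _ (by rw [hr]; omega), hr, addDelta]
    have : ((Fin.castLE hk i : Fin N) : ℕ) = i := rfl
    rw [this, show k - (k - 1 - (i : ℕ)) = i + 1 by omega]
    omega
  · intro p q hpq
    by_cases hq : (q : ℕ) < k
    · rw [hc1 q hq, hc1 p (by omega)]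
      exact (hanti p q (adj_lt hpq) hq).le
    · rw [hc2 q (by omega)]; exact Nat.zero_le _

theorem grass_eq_schur {N k : ℕ} [NeZero N] (hk1 : 1 ≤ k) (hk : k ≤ N) {nu : ℕ → ℕ}
    (hnu : IsPartFun k nu) {wv : Equiv.Perm (Fin N)} (h : IsGrassOf N k nu wv) :
    schubertPoly N wv = schurPoly N k nu := by
  haveI : NeZero k := ⟨by omega⟩
  have h0 : IsPartFun k (fun _ => 0) := ⟨rfl, fun _ _ => le_rfl, fun _ _ => rfl⟩
  have hg0 : IsGrassOf N k (fun _ => 0) 1 := by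
    have hp : ∀ j, 1 ≤ j → j ≤ N → val (1 : Equiv.Perm (Fin N)) j = j := by
      intro j h1 h2
      rw [val, Equiv.Perm.one_apply, pos]
      simp only
      rw [Nat.mod_eq_of_lt (by omega)]
      omega
    refine ⟨fun j h1 h2 => ?_, fun j h1 h2 => ?_⟩
    · rw [hp j h1 (by omega)]; rfl
    · rw [hp j (by omega) (by omega), hp (j + 1) (by omega) (by omega)]; omega
  have hfix : ∀ x : Fin N, k ≤ (x : ℕ) → revk hk x = x := fun x hx => revk_ge hk hx
  have e1 := dw_schubert_mul wv (revk hk) hfix (fun x y => grass_mono hnu h x y)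
  have e0 := dw_schubert_mul 1 (revk hk) hfix (fun x y => grass_mono h0 hg0 x y)
  rw [grass_dom hk hnu h] at e1
  rw [grass_dom hk h0 hg0, schubert_one] at e0
  have e2 := congrArg (dw (revk hk)) (bialternant hk nu)
  rw [dw_symk_mul (revk hk) hfix, dw_revk_AA, dw_revk_AA, e0, e1] at e2
  · rw [mul_smul_comm, mul_one] at e2
    have hne : (k.factorial : ℤ) ≠ 0 := by exact_mod_cast Nat.factorial_ne_zero k
    exact (smul_right_injective _ hne e2).symm
  · intro p q hpq hq
    exact schur_symm hk (p := ⟨p, by omega⟩) (q := ⟨q, hq⟩)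
      (by intro h; rw [Fin.mk.injEq] at h; omega) nu


/-- The list of transpositions of a chain. -/
def chainL (N : ℕ) [NeZero N] (a b : ℕ → ℕ) (m : ℕ) : List (Fin N × Fin N) :=
  (List.range m).map fun i => (pos N (a i), pos N (b i))

theorem prodL_chainL (N : ℕ) [NeZero N] (a b : ℕ → ℕ) (m : ℕ) :
    prodL (chainL N a b m) = tProd N a b m := by
  rw [prodL, chainL, tProd, List.map_map]
  rfl

theorem chainL_take (N : ℕ) [NeZero N] (a b : ℕ → ℕ) {m i : ℕ} (h : i ≤ m) :
    (chainL N a b m).take i = chainL N a b i := by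
  rw [chainL, chainL, ← List.map_take, List.take_range, min_eq_left h]

theorem pos_val {N : ℕ} [NeZero N] {j : ℕ} (h1 : 1 ≤ j) (h2 : j ≤ N) :
    ((pos N j : Fin N) : ℕ) = j - 1 := by
  rw [pos]
  exact Nat.mod_eq_of_lt (by omega)

theorem chainL_OK {N k m : ℕ} [NeZero N] {a b : ℕ → ℕ} (hk : k ≤ N)
    (h : ∀ i, i < m → 1 ≤ a i ∧ a i ≤ k ∧ k < b i ∧ b i ≤ N)
    (hb : ∀ i j, i < m → j < m → i ≠ j → b i ≠ b j) : OKL k (chainL N a b m) := by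
  constructor
  · intro x hx
    rw [chainL, List.mem_map] at hx
    obtain ⟨i, hi, rfl⟩ := hx
    obtain ⟨h1, h2, h3, h4⟩ := h i (List.mem_range.mp hi)
    simp only
    rw [pos_val h1 (by omega), pos_val (by omega) h4]
    omega
  · rw [chainL, List.map_map]
    apply List.Nodup.map_on _ List.nodup_range
    intro i hi j hj hij
    rw [List.mem_range] at hi hj
    by_contra hne
    apply hb i j hi hj hne
    have h1 := congrArg Fin.val hij
    simp only [Function.comp_apply] at h1
    have := h i hi
    have := h j hj
    rw [pos_val (by omega) (by omega), pos_val (by omega) (by omega)] at h1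
    omega

theorem EE_chainL {N k m : ℕ} [NeZero N] {a b : ℕ → ℕ} (hk : k ≤ N)
    (h : ∀ i, i < m → 1 ≤ a i ∧ a i ≤ k ∧ k < b i ∧ b i ≤ N) :
    EE hk (fun i : Fin k => rJ a m (i + 1)) =
      Multiset.toFinsupp ((chainL N a b m).map Prod.fst : Multiset (Fin N)) := by
  have hcount : ∀ l : Fin N, Multiset.toFinsupp
      ((chainL N a b m).map Prod.fst : Multiset (Fin N)) l = rJ a m ((l : ℕ) + 1) := by
    intro l
    rw [Multiset.toFinsupp_apply, chainL, List.map_map, rJ]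
    have e : (((List.range m).map (Prod.fst ∘ fun i => (pos N (a i), pos N (b i))) :
        List (Fin N)) : Multiset (Fin N)) = (Multiset.range m).map (fun i => pos N (a i)) := rfl
    rw [e, Multiset.count_map, Finset.card_def, Finset.filter_val, Finset.range_val]
    congr 1
    apply Multiset.filter_congr
    intro i hi
    rw [Multiset.mem_range] at hi
    have h1 := h i hi
    rw [Fin.ext_iff, pos_val (by omega) (by omega)]
    omega
  rw [EE_eq_iff]
  refine ⟨fun i => ?_, fun l hl => ?_⟩
  · rw [hcount]; rfl
  · rw [hcount, rJ, Finset.card_eq_zero, Finset.filter_eq_empty_iff]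
    intro i hi h'
    have := h i (Finset.mem_range.mp hi)
    omega

theorem structure_const {N : ℕ} [NeZero N] (w v w' : Equiv.Perm (Fin N))
    (c : Equiv.Perm (Fin N) → ℤ) (hc : SS N w * SS N v = ∑ u, c u • SS N u) :
    c w' = Dc w' (schubertPoly N w * schubertPoly N v) := by
  have h1 : Ideal.Quotient.mk (symIdeal N) (schubertPoly N w * schubertPoly N v) =
      Ideal.Quotient.mk (symIdeal N) (∑ u, c u • schubertPoly N u) := by
    rw [map_mul, map_sum]
    simp only [map_zsmul]
    exact hc
  rw [Ideal.Quotient.eq] at h1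
  have h2 := Dc_symIdeal w' h1
  rw [map_sub, sub_eq_zero] at h2
  rw [h2, map_sum]
  simp only [map_zsmul, Dc_schubert, smul_eq_mul, mul_ite, mul_one, mul_zero]
  rw [Finset.sum_ite_eq, if_pos (Finset.mem_univ _)]

/-- If `w →_{r[k,m]} w'`, witnessed by `a`, `b`, then the structure constant
`c^{w'}_{w, w(ν)}` equals the Littlewood–Richardson coefficient `c^λ_{μ,ν}`,
where `r_j = #{i : aᵢ = j}`, `μ_j = r_{j+1}+⋯+r_k` and `λ_j = μ_j + r_j`.
The structure constants and Littlewood–Richardson coefficients are encoded by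
their defining properties, the latter via the expansion of `s_μ · s_ν` in Schur
polynomials in `x₁,…,x_k` (here the paper's `n` is `n+1`). -/
theorem structure_constant_eq_LR_row (n k m : ℕ) (hk : 1 ≤ k) (hkn : k ≤ n + 1)
    (hm : 1 ≤ m) (w w' : Equiv.Perm (Fin (n + 1))) (a b : ℕ → ℕ)
    (hstep : StepOK (n + 1) k m w a b) (hw' : w' = w * tProd (n + 1) a b m)
    (hb : ∀ i j, i < m → j < m → i ≠ j → b i ≠ b j)
    (nu : ℕ → ℕ) (hnu : IsPartFun k nu) (hnu1 : nu 1 ≤ n + 1 - k)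
    (wnu : Equiv.Perm (Fin (n + 1))) (hwnu : IsGrassOf (n + 1) k nu wnu)
    (c : Equiv.Perm (Fin (n + 1)) → ℤ)
    (hc : SS (n + 1) w * SS (n + 1) wnu = ∑ u, c u • SS (n + 1) u)
    (cLR : (ℕ → ℕ) → ℤ) (hfin : (Function.support cLR).Finite)
    (hsupp : ∀ lam, cLR lam ≠ 0 → IsPartFun k lam)
    (hLR : schurPoly (n + 1) k (muJ a m k) * schurPoly (n + 1) k nu =
      ∑ᶠ lam, cLR lam • schurPoly (n + 1) k lam) :
    c w' = cLR (lamJ a m k) := by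
  have hNZ := structure_const w wnu w' c hc
  have hok := hstep.1
  rw [grass_eq_schur hk hkn hnu hwnu, mul_comm, hw', ← prodL_chainL,
    Dc_coeff (k := k) w (chainL (n + 1) a b m) (chainL_OK hkn hok hb) _ _
      (schur_supported nu)] at hNZ
  · rw [LR_side hkn m a (fun i hi => ⟨(hok i hi).1, (hok i hi).2.1⟩) nu cLR hfin hsupp hLR,
      EE_chainL (b := b) hkn hok, ← hNZ, hw', prodL_chainL]
  · intro i hi
    have hi' : i ≤ m := by simpa [chainL] using hi
    rw [chainL_take _ _ _ hi', prodL_chainL]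
    exact hstep.2 i hi'

end SchubertPieri
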